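/- arXiv:2505.08486 — 2 statements merged into one kernel-verified Lean document; each statement's English description precedes it below -/
import Mathlib

section
/- Let m>1 and t>2. There is a constant C = C(m) > 0 such that for every Schwartz function Ω on ℝ², ‖∂_X Δ_t^{-1} Ω‖_{L^∞(ℝ²)} + ⟨t⟩ ‖∂_Y Δ_t^{-1} Ω‖_{L^∞(ℝ²)} ≤ C ⟨t⟩^{3/2} ‖Ω‖_{L^{2m/(m−1)}(ℝ²)}^{1/2} ‖Ω‖_{L^{2m/(m+1)}(ℝ²)}^{1/2}. -/
open MeasureTheory SchwartzMap
open scoped ENNReal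

/-- The Fourier symbol `q_t(ξ,η)` of `-Δ_t`. -/
noncomputable def qsym (t ξ η : ℝ) : ℝ :=
  (1 + t ^ 2 / 3)⁻¹ * (ξ - t / 2 * (1 + t ^ 2 / 12) ^ (-(1 : ℝ) / 2) * η) ^ 2
    + (1 + t ^ 2 / 3) * (1 + t ^ 2 / 12)⁻¹ * η ^ 2

/-- The Fourier transform `f̂(ξ,η) = ∫ f(X,Y) e^{-i(Xξ + Yη)} dX dY`. -/
noncomputable def ft2 (f : ℝ × ℝ → ℂ) (ξ η : ℝ) : ℂ :=
  ∫ p : ℝ × ℝ, f p * Complex.exp (-Complex.I * ((p.1 * ξ + p.2 * η : ℝ) : ℂ))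

/-- `∂_X Δ_t⁻¹ f`: the function whose Fourier transform is `-i ξ q_t(ξ,η)⁻¹ f̂(ξ,η)`,
realized by the inverse Fourier integral. -/
noncomputable def dxInvLap (t : ℝ) (f : ℝ × ℝ → ℂ) : ℝ × ℝ → ℂ :=
  fun P => (((2 * Real.pi) ^ (-2 : ℤ) : ℝ) : ℂ) *
    ∫ w : ℝ × ℝ,
      -Complex.I * (w.1 : ℂ) / ((qsym t w.1 w.2 : ℝ) : ℂ) * ft2 f w.1 w.2 *
        Complex.exp (Complex.I * ((P.1 * w.1 + P.2 * w.2 : ℝ) : ℂ))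

/-- `∂_Y Δ_t⁻¹ f`: the function whose Fourier transform is `-i η q_t(ξ,η)⁻¹ f̂(ξ,η)`,
realized by the inverse Fourier integral. -/
noncomputable def dyInvLap (t : ℝ) (f : ℝ × ℝ → ℂ) : ℝ × ℝ → ℂ :=
  fun P => (((2 * Real.pi) ^ (-2 : ℤ) : ℝ) : ℂ) *
    ∫ w : ℝ × ℝ,
      -Complex.I * (w.2 : ℂ) / ((qsym t w.1 w.2 : ℝ) : ℂ) * ft2 f w.1 w.2 *
        Complex.exp (Complex.I * ((P.1 * w.1 + P.2 * w.2 : ℝ) : ℂ))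


lemma aux_exp_bound (z : ℝ) : z * Real.exp (-(z ^ 2)) ≤ Real.exp (-(z ^ 2 / 2)) := by
  have h1 : z ≤ Real.exp (z ^ 2 / 2) := by
    have := Real.add_one_le_exp (z ^ 2 / 2)
    nlinarith [sq_nonneg (z - 1)]
  calc z * Real.exp (-(z ^ 2)) ≤ Real.exp (z ^ 2 / 2) * Real.exp (-(z ^ 2)) := by gcongr
    _ = Real.exp (-(z ^ 2 / 2)) := by rw [← Real.exp_add]; congr 1; ring

/-- The one dimensional Gaussian character. -/
noncomputable def gch (β y : ℝ) (v : ℝ) : ℂ :=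
  Complex.exp (Complex.I * (y : ℂ) * v) * Complex.exp (-(β : ℂ) * (v : ℂ) ^ 2)

lemma gch_eq (β y v : ℝ) : gch β y v =
    Complex.exp (Complex.I * ((y * v : ℝ) : ℂ)) * ((Real.exp (-β * v ^ 2) : ℝ) : ℂ) := by
  unfold gch; push_cast; congr 2; ring

lemma gch_integrable {β : ℝ} (hβ : 0 < β) (y : ℝ) : Integrable (gch β y) := by
  unfold gch
  refine Integrable.bdd_mul (c := 1) (integrable_cexp_neg_mul_sq (by simpa using hβ)) (by fun_prop) ?_
  filter_upwards with v
  rw [show Complex.I * (y : ℂ) * v = ((y * v : ℝ) : ℂ) * Complex.I by push_cast; ring,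
    Complex.norm_exp_ofReal_mul_I]

lemma mul_gch_integrable {β : ℝ} (hβ : 0 < β) (y : ℝ) :
    Integrable (fun v : ℝ => (v : ℂ) * gch β y v) := by
  have : Integrable (fun v : ℝ => Complex.exp (Complex.I * (y : ℂ) * v) *
      ((v : ℂ) * Complex.exp (-(β : ℂ) * (v : ℂ) ^ 2))) := by
    refine Integrable.bdd_mul (c := 1) (integrable_mul_cexp_neg_mul_sq (by simpa using hβ))
      (by fun_prop) ?_
    filter_upwards with v
    rw [show Complex.I * (y : ℂ) * v = ((y * v : ℝ) : ℂ) * Complex.I by push_cast; ring,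
      Complex.norm_exp_ofReal_mul_I]
  refine this.congr ?_
  filter_upwards with v
  unfold gch; ring

lemma gch_norm_integral {β : ℝ} (hβ : 0 < β) (y : ℝ) :
    ‖∫ v, gch β y v‖ = Real.sqrt (Real.pi / β) * Real.exp (-(y ^ 2 / (4 * β))) := by
  unfold gch
  rw [fourierIntegral_gaussian (by simpa using hβ), norm_mul]
  congr 1
  · rw [show ((Real.pi : ℂ) / β) = ((Real.pi / β : ℝ) : ℂ) by push_cast; rfl,
      Complex.norm_cpow_eq_rpow_re_of_pos (by positivity), Real.sqrt_eq_rpow]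
    norm_num
  · rw [show (-(y : ℂ) ^ 2 / (4 * (β : ℂ))) = ((-(y ^ 2 / (4 * β)) : ℝ) : ℂ) by push_cast; ring,
      Complex.norm_exp_ofReal]

lemma gch_norm_le {β : ℝ} (hβ : 0 < β) (y : ℝ) :
    ‖∫ v, gch β y v‖ ≤ Real.sqrt (Real.pi / β) * Real.exp (-(y ^ 2 / (8 * β))) := by
  rw [gch_norm_integral hβ]
  gcongr
  norm_num

lemma mul_gch_norm_le {β : ℝ} (hβ : 0 < β) (y : ℝ) :
    ‖∫ v : ℝ, (v : ℂ) * gch β y v‖ ≤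
      Real.sqrt (Real.pi / β) / Real.sqrt β * Real.exp (-(y ^ 2 / (8 * β))) := by
  have hd : ∀ v : ℝ, HasDerivAt (gch β y)
      (Complex.I * (y : ℂ) * gch β y v - 2 * (β : ℂ) * ((v : ℂ) * gch β y v)) v := by
    intro v
    have h1 : HasDerivAt (fun v : ℝ => Complex.I * (y : ℂ) * v) (Complex.I * (y : ℂ)) v := by
      simpa using (Complex.ofRealCLM.hasDerivAt (x := v)).const_mul (Complex.I * (y : ℂ))
    have h2 : HasDerivAt (fun v : ℝ => -(β : ℂ) * (v : ℂ) ^ 2) (-(β : ℂ) * (2 * (v : ℂ))) v := by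
      simpa using ((Complex.ofRealCLM.hasDerivAt (x := v)).pow 2).const_mul (-(β : ℂ))
    refine (h1.cexp.mul h2.cexp).congr_deriv ?_
    unfold gch; ring
  have hi1 := (gch_integrable hβ y).const_mul (Complex.I * (y : ℂ))
  have hi2 := (mul_gch_integrable hβ y).const_mul (2 * (β : ℂ))
  have h0 := integral_eq_zero_of_hasDerivAt_of_integrable hd (hi1.sub hi2) (gch_integrable hβ y)
  rw [integral_sub hi1 hi2, integral_const_mul, integral_const_mul, sub_eq_zero] at h0
  have h1 := congrArg norm h0
  rw [norm_mul, norm_mul (2 * (β : ℂ)), gch_norm_integral hβ] at h1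
  have h2 : ‖Complex.I * (y : ℂ)‖ = |y| := by simp
  have h3 : ‖(2 * (β : ℂ))‖ = 2 * β := by simp [abs_of_pos hβ]
  rw [h2, h3] at h1
  set N := ‖∫ v : ℝ, (v : ℂ) * gch β y v‖
  have hsq : 0 < Real.sqrt β := Real.sqrt_pos.2 hβ
  have hss : Real.sqrt β * Real.sqrt β = β := Real.mul_self_sqrt hβ.le
  have hz := aux_exp_bound (|y| / (2 * Real.sqrt β))
  have e1 : (|y| / (2 * Real.sqrt β)) ^ 2 = y ^ 2 / (4 * β) := by
    rw [div_pow, sq_abs, mul_pow, Real.sq_sqrt hβ.le]; norm_num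
  rw [e1, show y ^ 2 / (4 * β) / 2 = y ^ 2 / (8 * β) by ring] at hz
  have hN : N = Real.sqrt (Real.pi / β) / Real.sqrt β *
      (|y| / (2 * Real.sqrt β) * Real.exp (-(y ^ 2 / (4 * β)))) := by
    have : N = |y| * (Real.sqrt (Real.pi / β) * Real.exp (-(y ^ 2 / (4 * β)))) / (2 * β) := by
      rw [h1]; field_simp
    have key : ∀ X E k Y : ℝ, k ≠ 0 → Y * (X * E) / (2 * (k * k)) = X / k * (Y / (2 * k) * E) := by
      intro X E k Y hk; field_simp
    have key2 := key (Real.sqrt (Real.pi / β)) (Real.exp (-(y ^ 2 / (4 * β)))) _ |y| hsq.ne'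
    rw [hss] at key2
    rw [this, key2]
  rw [hN]
  gcongr

lemma shear_mp (σ : ℝ) : MeasurePreserving (fun p : ℝ × ℝ => (p.1, p.2 + σ * p.1)) := by
  refine MeasurePreserving.skew_product (f := id) (g := fun x y => y + σ * x)
    (MeasurePreserving.id volume) (by unfold Function.uncurry; fun_prop) ?_
  filter_upwards with x
  exact map_add_right_eq_self volume (σ * x)

lemma shear_me (σ : ℝ) : MeasurableEmbedding (fun p : ℝ × ℝ => (p.1, p.2 + σ * p.1)) := by
  refine Continuous.measurableEmbedding (by fun_prop) ?_
  rintro ⟨a, b⟩ ⟨c, d⟩ h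
  simp only [Prod.mk.injEq] at h
  obtain ⟨rfl, h⟩ := h
  simpa using h

lemma shear'_mp (σ : ℝ) : MeasurePreserving (fun p : ℝ × ℝ => (p.1 + σ * p.2, p.2)) := by
  have h : MeasurePreserving (Prod.swap : ℝ × ℝ → ℝ × ℝ) := Measure.measurePreserving_swap
  exact (h.comp ((shear_mp σ).comp h))

lemma shear'_me (σ : ℝ) : MeasurableEmbedding (fun p : ℝ × ℝ => (p.1 + σ * p.2, p.2)) := by
  refine Continuous.measurableEmbedding (by fun_prop) ?_
  rintro ⟨a, b⟩ ⟨c, d⟩ h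
  simp only [Prod.mk.injEq] at h
  obtain ⟨h, rfl⟩ := h
  simpa using h

/-- Integration in the heat time. -/
lemma time_integral {δ A B : ℝ} (hδ : 0 < δ) (hA : 0 ≤ A) (hB : 0 ≤ B) (φ : ℝ → ℂ)
    (h1 : ∀ s, 0 < s → ‖φ s‖ ≤ A * s ^ (δ - 1)) (h2 : ∀ s, 0 < s → ‖φ s‖ ≤ B * s ^ (-δ - 1)) :
    ‖∫ s in Set.Ioi (0 : ℝ), φ s‖ ≤ 2 / δ * Real.sqrt (A * B) := by
  by_cases hAB : A = 0 ∨ B = 0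
  · have : ∫ s in Set.Ioi (0 : ℝ), φ s = 0 := by
      rw [setIntegral_congr_fun (g := fun _ => 0) measurableSet_Ioi]
      · simp
      · intro s hs
        rcases hAB with h | h
        · simpa [h] using h1 s hs
        · simpa [h] using h2 s hs
    rw [this, norm_zero]; positivity
  push Not at hAB
  have hA' : 0 < A := lt_of_le_of_ne hA (Ne.symm hAB.1)
  have hB' : 0 < B := lt_of_le_of_ne hB (Ne.symm hAB.2)
  set S : ℝ := (Real.sqrt (B / A)) ^ (1 / δ) with hS
  have hSpos : 0 < S := by positivity
  have hSδ : S ^ δ = Real.sqrt (B / A) := by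
    rw [hS, ← Real.rpow_mul (by positivity)]; field_simp; simp
  set g : ℝ → ℝ := fun s => if s ≤ S then A * s ^ (δ - 1) else B * s ^ (-δ - 1) with hg
  have hunion : Set.Ioi (0 : ℝ) = Set.Ioc 0 S ∪ Set.Ioi S := (Set.Ioc_union_Ioi_eq_Ioi hSpos.le).symm
  have hI1 : IntegrableOn (fun s : ℝ => A * s ^ (δ - 1)) (Set.Ioc 0 S) := by
    have := (intervalIntegral.intervalIntegrable_rpow' (a := 0) (b := S) (r := δ - 1) (by linarith))
    exact ((intervalIntegrable_iff_integrableOn_Ioc_of_le hSpos.le).1 this).const_mul A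
  have hI2 : IntegrableOn (fun s : ℝ => B * s ^ (-δ - 1)) (Set.Ioi S) :=
    (integrableOn_Ioi_rpow_of_lt (by linarith) hSpos).const_mul B
  have e1 : Set.EqOn (fun s : ℝ => A * s ^ (δ - 1)) g (Set.Ioc 0 S) := by
    intro s hs; simp [hg, hs.2]
  have e2 : Set.EqOn (fun s : ℝ => B * s ^ (-δ - 1)) g (Set.Ioi S) := by
    intro s hs; simp [hg, not_le.2 (Set.mem_Ioi.1 hs)]
  have hg1 : IntegrableOn g (Set.Ioc 0 S) := hI1.congr_fun e1 measurableSet_Ioc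
  have hg2 : IntegrableOn g (Set.Ioi S) := hI2.congr_fun e2 measurableSet_Ioi
  have hgI : IntegrableOn g (Set.Ioi 0) := by rw [hunion]; exact hg1.union hg2
  refine (norm_integral_le_of_norm_le hgI ?_).trans ?_
  · refine (ae_restrict_iff' measurableSet_Ioi).2 (Filter.Eventually.of_forall fun s hs => ?_)
    simp only [hg]
    split_ifs
    · exact h1 s hs
    · exact h2 s hs
  · rw [hunion, setIntegral_union (Set.Ioc_disjoint_Ioi le_rfl) measurableSet_Ioi hg1 hg2,
      ← setIntegral_congr_fun measurableSet_Ioc e1, ← setIntegral_congr_fun measurableSet_Ioi e2,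
      integral_const_mul, integral_const_mul, integral_Ioi_rpow_of_lt (by linarith) hSpos,
      ← intervalIntegral.integral_of_le hSpos.le, integral_rpow (Or.inl (by linarith))]
    rw [show δ - 1 + 1 = δ by ring, show -δ - 1 + 1 = -δ by ring, Real.zero_rpow hδ.ne',
      Real.rpow_neg hSpos.le, hSδ, Real.sqrt_div hB, Real.sqrt_mul hA]
    have ha : Real.sqrt A * Real.sqrt A = A := Real.mul_self_sqrt hA
    have hb : Real.sqrt B * Real.sqrt B = B := Real.mul_self_sqrt hB
    have ha0 : 0 < Real.sqrt A := Real.sqrt_pos.2 hA'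
    have hb0 : 0 < Real.sqrt B := Real.sqrt_pos.2 hB'
    apply le_of_eq
    nth_rewrite 1 [← ha]
    nth_rewrite 2 [← hb]
    field_simp
    ring

/-- Heat representation of `1/q`. -/
lemma heat_rep (q : ℝ × ℝ → ℝ) (hqc : Continuous q) (hq0 : ∀ w, 0 ≤ q w) (h : ℝ × ℝ → ℂ)
    (hh : Integrable h) (h0 : ∀ w, q w = 0 → h w = 0) :
    ∫ w, h w = ∫ s in Set.Ioi (0 : ℝ), ∫ w, h w * ((q w * Real.exp (-(s * q w)) : ℝ) : ℂ) := by
  have hint : ∀ c : ℝ, 0 < c → IntegrableOn (fun s => c * Real.exp (-(s * c))) (Set.Ioi 0) := by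
    intro c hc
    have h1 : IntegrableOn (fun s => c * Real.exp (-c * s)) (Set.Ioi 0) :=
      (integrableOn_exp_mul_Ioi (a := -c) (by linarith) 0).const_mul c
    refine h1.congr_fun ?_ measurableSet_Ioi
    intro s _
    simp only
    congr 2; ring
  have hval : ∀ c : ℝ, 0 < c → ∫ s in Set.Ioi (0 : ℝ), c * Real.exp (-(s * c)) = 1 := by
    intro c hc
    have : ∀ s : ℝ, c * Real.exp (-(s * c)) = c * Real.exp (-c * s) := fun s => by congr 2; ring
    simp_rw [this]
    rw [integral_const_mul, integral_exp_mul_Ioi (by linarith)]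
    simp; field_simp
  have hpt : ∀ w, ∫ s in Set.Ioi (0 : ℝ), h w * ((q w * Real.exp (-(s * q w)) : ℝ) : ℂ) = h w := by
    intro w
    rcases (hq0 w).eq_or_lt with hw | hw
    · simp [h0 w hw.symm]
    · rw [integral_const_mul, integral_complex_ofReal, hval _ hw]; simp
  rw [← integral_integral_swap]
  · exact integral_congr_ae (Filter.Eventually.of_forall fun w => (hpt w).symm)
  · rw [integrable_prod_iff]
    · refine ⟨Filter.Eventually.of_forall fun w => ?_, ?_⟩
      · rcases (hq0 w).eq_or_lt with hw | hw
        · simp [Function.uncurry, ← hw]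
        · exact (hint _ hw).ofReal.const_mul (h w)
      · refine hh.norm.congr (Filter.Eventually.of_forall fun w => ?_)
        simp only [Function.uncurry, norm_mul]
        rcases (hq0 w).eq_or_lt with hw | hw
        · simp [h0 w hw.symm]
        · rw [integral_const_mul]
          have : ∀ s : ℝ, ‖((q w * Real.exp (-(s * q w)) : ℝ) : ℂ)‖
              = q w * Real.exp (-(s * q w)) := by
            intro s
            rw [Complex.norm_real, Real.norm_of_nonneg (by positivity)]
          simp_rw [this]
          rw [hval _ hw, mul_one]
    · simp only [Function.uncurry_def]
      refine AEStronglyMeasurable.mul (hh.aestronglyMeasurable.comp_fst) ?_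
      apply Continuous.aestronglyMeasurable
      fun_prop

/-- Linear factor times Gaussian. -/
noncomputable def gfun (α β σ c d : ℝ) (w : ℝ × ℝ) : ℝ :=
  (c * (w.1 - σ * w.2) + d * w.2) * Real.exp (-(α * (w.1 - σ * w.2) ^ 2 + β * w.2 ^ 2))

lemma gfun_shear (α β σ c d x y u v : ℝ) :
    ((gfun α β σ c d (u + σ * v, v) : ℝ) : ℂ) *
        Complex.exp (Complex.I * ((x * (u + σ * v) + y * v : ℝ) : ℂ)) =
      (c : ℂ) * (((u : ℂ) * gch α x u) * gch β (y + σ * x) v) +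
      (d : ℂ) * (gch α x u * ((v : ℂ) * gch β (y + σ * x) v)) := by
  have e1 : Complex.exp (Complex.I * ((x * (u + σ * v) + y * v : ℝ) : ℂ)) =
      Complex.exp (Complex.I * ((x * u : ℝ) : ℂ)) *
        Complex.exp (Complex.I * (((y + σ * x) * v : ℝ) : ℂ)) := by
    rw [← Complex.exp_add]; congr 1; push_cast; ring
  have e2 : Real.exp (-(α * (u + σ * v - σ * v) ^ 2 + β * v ^ 2)) =
      Real.exp (-α * u ^ 2) * Real.exp (-β * v ^ 2) := by
    rw [← Real.exp_add]; congr 1; ring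
  rw [gch_eq, gch_eq, e1]
  unfold gfun
  simp only
  rw [e2]
  push_cast
  ring

lemma gfun_integrable_sh {α β : ℝ} (hα : 0 < α) (hβ : 0 < β) (σ c d x y : ℝ) :
    Integrable (fun w : ℝ × ℝ => (c : ℂ) * (((w.1 : ℂ) * gch α x w.1) * gch β (y + σ * x) w.2) +
      (d : ℂ) * (gch α x w.1 * ((w.2 : ℂ) * gch β (y + σ * x) w.2))) := by
  refine Integrable.add (Integrable.const_mul ?_ _) (Integrable.const_mul ?_ _)
  · exact (mul_gch_integrable hα x).mul_prod (gch_integrable hβ (y + σ * x))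
  · exact (gch_integrable hα x).mul_prod (mul_gch_integrable hβ (y + σ * x))

lemma gfun_integrable {α β : ℝ} (hα : 0 < α) (hβ : 0 < β) (σ c d : ℝ) :
    Integrable (fun w : ℝ × ℝ => ((gfun α β σ c d w : ℝ) : ℂ)) := by
  rw [← (shear'_mp σ).integrable_comp_emb (shear'_me σ)]
  refine (gfun_integrable_sh hα hβ σ c d 0 0).congr (Filter.Eventually.of_forall fun w => ?_)
  simp only
  rw [← gfun_shear]
  simp

/-- The exponential weight. -/
noncomputable def efun (α β σ : ℝ) (z : ℝ × ℝ) : ℝ :=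
  Real.exp (-(z.1 ^ 2 / (8 * α))) * Real.exp (-((z.2 + σ * z.1) ^ 2 / (8 * β)))

lemma kern_bound {α β : ℝ} (hα : 0 < α) (hβ : 0 < β) (σ : ℝ) {c d : ℝ} (hc : 0 ≤ c) (hd : 0 ≤ d)
    (z : ℝ × ℝ) :
    ‖∫ w : ℝ × ℝ, ((gfun α β σ c d w : ℝ) : ℂ) *
        Complex.exp (Complex.I * ((z.1 * w.1 + z.2 * w.2 : ℝ) : ℂ))‖ ≤
      Real.sqrt (Real.pi / α) * Real.sqrt (Real.pi / β) * (c / Real.sqrt α + d / Real.sqrt β) *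
        efun α β σ z := by
  rw [← (shear'_mp σ).integral_comp (shear'_me σ)]
  simp only [gfun_shear]
  rw [integral_add, integral_const_mul, integral_const_mul]
  · have e1 := integral_prod_mul (μ := (volume : Measure ℝ)) (ν := (volume : Measure ℝ))
      (fun u : ℝ => (u : ℂ) * gch α z.1 u) (gch β (z.2 + σ * z.1))
    have e2 := integral_prod_mul (μ := (volume : Measure ℝ)) (ν := (volume : Measure ℝ))
      (gch α z.1) (fun u : ℝ => (u : ℂ) * gch β (z.2 + σ * z.1) u)
    rw [Measure.volume_eq_prod, e1, e2]
    refine (norm_add_le _ _).trans ?_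
    simp only [norm_mul, Complex.norm_real, Real.norm_of_nonneg hc, Real.norm_of_nonneg hd]
    have a1 := gch_norm_le hα z.1
    have a2 := mul_gch_norm_le hα z.1
    have b1 := gch_norm_le hβ (z.2 + σ * z.1)
    have b2 := mul_gch_norm_le hβ (z.2 + σ * z.1)
    calc _ ≤ c * ((Real.sqrt (Real.pi / α) / Real.sqrt α * Real.exp (-(z.1 ^ 2 / (8 * α)))) *
            (Real.sqrt (Real.pi / β) * Real.exp (-((z.2 + σ * z.1) ^ 2 / (8 * β))))) +
          d * ((Real.sqrt (Real.pi / α) * Real.exp (-(z.1 ^ 2 / (8 * α)))) *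
            (Real.sqrt (Real.pi / β) / Real.sqrt β *
              Real.exp (-((z.2 + σ * z.1) ^ 2 / (8 * β))))) := by gcongr
      _ = _ := by unfold efun; ring
  · exact ((mul_gch_integrable hα _).mul_prod (gch_integrable hβ _)).const_mul _
  · exact ((gch_integrable hα _).mul_prod (mul_gch_integrable hβ _)).const_mul _

lemma efun_pos (α β σ : ℝ) (z) : 0 < efun α β σ z := by unfold efun; positivity

lemma efun_cont (α β σ : ℝ) : Continuous (efun α β σ) := by unfold efun; fun_prop

lemma efun_rpow {α β : ℝ} (σ r : ℝ) (z : ℝ × ℝ) : efun α β σ z ^ r =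
    Real.exp (-(r / (8 * α)) * z.1 ^ 2) * Real.exp (-(r / (8 * β)) * (z.2 + σ * z.1) ^ 2) := by
  unfold efun
  rw [← Real.exp_add, ← Real.exp_add, ← Real.exp_mul]
  congr 1; ring

lemma efun_rpow_integrable {α β : ℝ} (hα : 0 < α) (hβ : 0 < β) (σ : ℝ) {r : ℝ} (hr : 0 < r) :
    Integrable (fun z => efun α β σ z ^ r) := by
  have h := (integrable_exp_neg_mul_sq (b := r / (8 * α)) (by positivity)).mul_prod
    (integrable_exp_neg_mul_sq (b := r / (8 * β)) (by positivity))
  rw [← Measure.volume_eq_prod, ← (shear_mp σ).integrable_comp_emb (shear_me σ)] at h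
  refine h.congr (Filter.Eventually.of_forall fun z => ?_)
  simp only [Function.comp, efun_rpow]

lemma efun_rpow_integral {α β : ℝ} (hα : 0 < α) (hβ : 0 < β) (σ : ℝ) {r : ℝ} (hr : 0 < r) :
    ∫ z, efun α β σ z ^ r = 8 * Real.pi / r * Real.sqrt (α * β) := by
  simp_rw [efun_rpow]
  have h := (shear_mp σ).integral_comp (shear_me σ) (fun z : ℝ × ℝ =>
    Real.exp (-(r / (8 * α)) * z.1 ^ 2) * Real.exp (-(r / (8 * β)) * z.2 ^ 2))
  simp only at h
  rw [h, Measure.volume_eq_prod, integral_prod_mul (fun x : ℝ => Real.exp (-(r / (8 * α)) * x ^ 2))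
    (fun x : ℝ => Real.exp (-(r / (8 * β)) * x ^ 2)), integral_gaussian, integral_gaussian,
    ← Real.sqrt_mul (by positivity),
    show Real.pi / (r / (8 * α)) * (Real.pi / (r / (8 * β))) = (8 * Real.pi / r) ^ 2 * (α * β) by
      field_simp, Real.sqrt_mul (by positivity), Real.sqrt_sq (by positivity)]

lemma efun_memLp {α β : ℝ} (hα : 0 < α) (hβ : 0 < β) (σ : ℝ) {r : ℝ} (hr : 0 < r) (P : ℝ × ℝ) :
    MemLp (fun p => efun α β σ (P - p)) (ENNReal.ofReal r) := by
  rw [← integrable_norm_rpow_iff]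
  · rw [ENNReal.toReal_ofReal hr.le]
    have := (efun_rpow_integrable hα hβ σ hr).comp_sub_left P
    refine this.congr (Filter.Eventually.of_forall fun p => ?_)
    simp only
    rw [Real.norm_of_nonneg (efun_pos _ _ _ _).le]
  · exact ((efun_cont α β σ).comp (by fun_prop)).aestronglyMeasurable
  · simpa using hr
  · simp

/-- Hölder against the weight. -/
lemma holder_e {α β : ℝ} (hα : 0 < α) (hβ : 0 < β) (σ : ℝ) {r r' : ℝ} (hr : r'.HolderConjugate r)
    (P : ℝ × ℝ) (Ω : 𝓢(ℝ × ℝ, ℝ)) :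
    ∫ p, ‖Ω p‖ * efun α β σ (P - p) ≤
      (eLpNorm (fun p => Ω p) (ENNReal.ofReal r')).toReal *
        (8 * Real.pi * (Real.sqrt (α * β)) ^ (1 / r)) := by
  have hm : MemLp (fun p => Ω p) (ENNReal.ofReal r') := Ω.memLp _
  have h := integral_mul_le_Lp_mul_Lq_of_nonneg hr (μ := (volume : Measure (ℝ × ℝ)))
    (f := fun p => ‖Ω p‖) (g := fun p => efun α β σ (P - p))
    (Filter.Eventually.of_forall fun p => norm_nonneg _)
    (Filter.Eventually.of_forall fun p => (efun_pos _ _ _ _).le) hm.norm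
    (efun_memLp hα hβ σ hr.symm.pos P)
  refine h.trans ?_
  have hr0 := hr.pos
  have hr1 := hr.symm.pos
  have hr2 := hr.symm.lt
  rw [hm.eLpNorm_eq_integral_rpow_norm (by simpa using hr0) (by simp),
    ENNReal.toReal_ofReal hr0.le, ENNReal.toReal_ofReal (by positivity), one_div]
  gcongr
  rw [integral_sub_left_eq_self (fun z => efun α β σ z ^ r), efun_rpow_integral hα hβ σ hr1,
    Real.mul_rpow (by positivity) (by positivity)]
  gcongr
  have hpi := Real.pi_gt_three
  have : 8 * Real.pi / r ≤ 8 * Real.pi := div_le_self (by positivity) hr2.le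
  calc (8 * Real.pi / r) ^ (1 / r) ≤ (8 * Real.pi) ^ (1 / r) := by gcongr
    _ ≤ (8 * Real.pi) ^ (1 : ℝ) := by
      apply Real.rpow_le_rpow_of_exponent_le (by linarith)
      rw [div_le_one hr1]; exact hr2.le
    _ = _ := Real.rpow_one _

/-- Fubini in physical and frequency variables. -/
lemma fixed_s {α β : ℝ} (hα : 0 < α) (hβ : 0 < β) (σ : ℝ) {c d : ℝ} (hc : 0 ≤ c) (hd : 0 ≤ d)
    (P : ℝ × ℝ) (Ω : 𝓢(ℝ × ℝ, ℝ)) :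
    ‖∫ w : ℝ × ℝ, ((gfun α β σ c d w : ℝ) : ℂ) * ft2 (fun p => (Ω p : ℂ)) w.1 w.2 *
        Complex.exp (Complex.I * ((P.1 * w.1 + P.2 * w.2 : ℝ) : ℂ))‖ ≤
      Real.sqrt (Real.pi / α) * Real.sqrt (Real.pi / β) * (c / Real.sqrt α + d / Real.sqrt β) *
        ∫ p, ‖Ω p‖ * efun α β σ (P - p) := by
  have hΩ : Integrable (fun p => (Ω p : ℂ)) := Ω.integrable.ofReal
  have e1 : ∀ w : ℝ × ℝ, ((gfun α β σ c d w : ℝ) : ℂ) * ft2 (fun p => (Ω p : ℂ)) w.1 w.2 *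
        Complex.exp (Complex.I * ((P.1 * w.1 + P.2 * w.2 : ℝ) : ℂ)) =
      ∫ p : ℝ × ℝ, Complex.exp (Complex.I *
        (((P.1 - p.1) * w.1 + (P.2 - p.2) * w.2 : ℝ) : ℂ)) * (((gfun α β σ c d w : ℝ) : ℂ) * Ω p) := by
    intro w
    unfold ft2
    rw [← integral_const_mul, ← integral_mul_const]
    congr 1
    ext p
    have : Complex.exp (Complex.I * (((P.1 - p.1) * w.1 + (P.2 - p.2) * w.2 : ℝ) : ℂ)) =
      Complex.exp (-Complex.I * ((p.1 * w.1 + p.2 * w.2 : ℝ) : ℂ)) *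
        Complex.exp (Complex.I * ((P.1 * w.1 + P.2 * w.2 : ℝ) : ℂ)) := by
      rw [← Complex.exp_add]; congr 1; push_cast; ring
    rw [this]; ring
  simp_rw [e1]
  rw [integral_integral_swap]
  · rw [← integral_const_mul]
    refine norm_integral_le_of_norm_le ?_ (Filter.Eventually.of_forall fun p => ?_)
    · refine Integrable.const_mul ?_ _
      refine Ω.integrable.norm.mul_bdd (c := 1)
        ((efun_cont α β σ).comp (by fun_prop)).aestronglyMeasurable ?_
      filter_upwards with p
      rw [Real.norm_of_nonneg (efun_pos _ _ _ _).le]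
      unfold efun
      rw [← Real.exp_add]
      apply Real.exp_le_one_iff.2
      have h1 : 0 ≤ (P - p).1 ^ 2 / (8 * α) := by positivity
      have h2 : 0 ≤ ((P - p).2 + σ * (P - p).1) ^ 2 / (8 * β) := by positivity
      linarith
    · have e2 : ∫ w : ℝ × ℝ, Complex.exp (Complex.I *
          (((P.1 - p.1) * w.1 + (P.2 - p.2) * w.2 : ℝ) : ℂ)) *
            (((gfun α β σ c d w : ℝ) : ℂ) * Ω p) =
          (∫ w : ℝ × ℝ, ((gfun α β σ c d w : ℝ) : ℂ) * Complex.exp (Complex.I *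
          (((P - p).1 * w.1 + (P - p).2 * w.2 : ℝ) : ℂ))) * Ω p := by
        rw [← integral_mul_const]
        congr 1; ext w; simp only [Prod.fst_sub, Prod.snd_sub]; ring
      rw [e2, norm_mul, Complex.norm_real]
      calc _ ≤ (Real.sqrt (Real.pi / α) * Real.sqrt (Real.pi / β) *
            (c / Real.sqrt α + d / Real.sqrt β) * efun α β σ (P - p)) * ‖Ω p‖ := by
              gcongr; exact kern_bound hα hβ σ hc hd _
        _ = _ := by ring
  · have := (gfun_integrable hα hβ σ c d).mul_prod hΩ
    simp only [Function.uncurry_def]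
    refine this.bdd_mul (c := 1) (Continuous.aestronglyMeasurable (by fun_prop)) ?_
    filter_upwards with z
    rw [mul_comm, Complex.norm_exp_ofReal_mul_I]

lemma fixed_bound {a b s : ℝ} (ha : 0 < a) (hb : 0 < b) (hs : 0 < s) (σ : ℝ) {c d : ℝ}
    (hc : 0 ≤ c) (hd : 0 ≤ d) (P : ℝ × ℝ) (Ω : 𝓢(ℝ × ℝ, ℝ)) {r r' ε : ℝ}
    (hr : r'.HolderConjugate r) (hε : 1 / r = 1 / 2 + ε) :
    ‖∫ w : ℝ × ℝ, ((gfun (s * a⁻¹) (s * (a * b⁻¹)) σ c d w : ℝ) : ℂ) *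
        ft2 (fun p => (Ω p : ℂ)) w.1 w.2 *
        Complex.exp (Complex.I * ((P.1 * w.1 + P.2 * w.2 : ℝ) : ℂ))‖ ≤
      (8 * Real.pi ^ 2 * (c * Real.sqrt a + d * Real.sqrt (b / a))) *
        (eLpNorm (fun p => Ω p) (ENNReal.ofReal r')).toReal * (Real.sqrt b) ^ (1 / 2 - ε) *
        s ^ (ε - 1) := by
  have hα : 0 < s * a⁻¹ := by positivity
  have hβ : 0 < s * (a * b⁻¹) := by positivity
  refine (fixed_s hα hβ σ hc hd P Ω).trans ?_
  have hκ : 0 < Real.sqrt b := Real.sqrt_pos.2 hb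
  have e1 : Real.sqrt (Real.pi / (s * a⁻¹)) * Real.sqrt (Real.pi / (s * (a * b⁻¹))) =
      Real.pi * Real.sqrt b / s := by
    rw [← Real.sqrt_mul (by positivity), show Real.pi / (s * a⁻¹) * (Real.pi / (s * (a * b⁻¹))) =
      (Real.pi / s) ^ 2 * b by field_simp, Real.sqrt_mul (by positivity),
      Real.sqrt_sq (by positivity)]
    ring
  have e2 : c / Real.sqrt (s * a⁻¹) = c * Real.sqrt a / Real.sqrt s := by
    rw [Real.sqrt_mul hs.le, Real.sqrt_inv]; field_simp
  have e3 : d / Real.sqrt (s * (a * b⁻¹)) = d * Real.sqrt (b / a) / Real.sqrt s := by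
    rw [Real.sqrt_mul hs.le, Real.sqrt_div hb.le, Real.sqrt_mul ha.le, Real.sqrt_inv]; field_simp
  have e4 : Real.sqrt (s * a⁻¹ * (s * (a * b⁻¹))) = s / Real.sqrt b := by
    rw [show s * a⁻¹ * (s * (a * b⁻¹)) = s ^ 2 / b by field_simp, Real.sqrt_div (by positivity),
      Real.sqrt_sq hs.le]
  have hH := holder_e hα hβ σ hr P Ω
  rw [e4, hε] at hH
  rw [e1, e2, e3]
  set N := (eLpNorm (fun p => Ω p) (ENNReal.ofReal r')).toReal
  set κ := Real.sqrt b
  set D := c * Real.sqrt a + d * Real.sqrt (b / a) with hD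
  have hD0 : 0 ≤ D := by positivity
  rw [← add_div, ← hD]
  have f1 : s ^ (ε - 1) = s ^ (1 / 2 + ε) / (s * Real.sqrt s) := by
    rw [Real.sqrt_eq_rpow, show ε - 1 = (1 / 2 + ε) - (1 + 1 / 2) by ring, Real.rpow_sub hs,
      Real.rpow_add hs 1, Real.rpow_one]
  have f2 : κ ^ (1 / 2 - ε) = κ / κ ^ (1 / 2 + ε) := by
    rw [show 1 / 2 - ε = 1 - (1 / 2 + ε) by ring, Real.rpow_sub hκ, Real.rpow_one]
  calc _ ≤ Real.pi * κ / s * (D / Real.sqrt s) *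
        (N * (8 * Real.pi * (s / κ) ^ (1 / 2 + ε))) := by gcongr
    _ = _ := by
      rw [f1, f2, Real.div_rpow hs.le hκ.le]
      field_simp

lemma main_bound {a b : ℝ} (ha : 0 < a) (hb : 0 < b) (σ : ℝ) {c d : ℝ}
    (hc : 0 ≤ c) (hd : 0 ≤ d) (P : ℝ × ℝ) (Ω : 𝓢(ℝ × ℝ, ℝ)) {r r' δ : ℝ} (hδ : 0 < δ)
    (hr : r.HolderConjugate r') (hr1 : 1 / r = 1 / 2 - δ) (hr2 : 1 / r' = 1 / 2 + δ) :
    ‖∫ w : ℝ × ℝ, -Complex.I * ((c * (w.1 - σ * w.2) + d * w.2 : ℝ) : ℂ) /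
        ((a⁻¹ * (w.1 - σ * w.2) ^ 2 + a * b⁻¹ * w.2 ^ 2 : ℝ) : ℂ) *
        ft2 (fun p => (Ω p : ℂ)) w.1 w.2 *
        Complex.exp (Complex.I * ((P.1 * w.1 + P.2 * w.2 : ℝ) : ℂ))‖ ≤
      2 / δ * ((8 * Real.pi ^ 2 * (c * Real.sqrt a + d * Real.sqrt (b / a))) *
        Real.sqrt (Real.sqrt b) *
        Real.sqrt ((eLpNorm (fun p => Ω p) (ENNReal.ofReal r)).toReal *
          (eLpNorm (fun p => Ω p) (ENNReal.ofReal r')).toReal)) := by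
  set h : ℝ × ℝ → ℂ := fun w => -Complex.I * ((c * (w.1 - σ * w.2) + d * w.2 : ℝ) : ℂ) /
        ((a⁻¹ * (w.1 - σ * w.2) ^ 2 + a * b⁻¹ * w.2 ^ 2 : ℝ) : ℂ) *
        ft2 (fun p => (Ω p : ℂ)) w.1 w.2 *
        Complex.exp (Complex.I * ((P.1 * w.1 + P.2 * w.2 : ℝ) : ℂ)) with hh
  by_cases hI : Integrable h
  swap
  · rw [integral_undef hI, norm_zero]; positivity
  set q : ℝ × ℝ → ℝ := fun w => a⁻¹ * (w.1 - σ * w.2) ^ 2 + a * b⁻¹ * w.2 ^ 2 with hq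
  rw [heat_rep q (by fun_prop) (fun w => by positivity) h hI
    (fun w hw => by simp only [hh]; rw [show (a⁻¹ * (w.1 - σ * w.2) ^ 2 + a * b⁻¹ * w.2 ^ 2) = 0 from hw]; simp)]
  have hs : ∀ s : ℝ, ∫ w, h w * ((q w * Real.exp (-(s * q w)) : ℝ) : ℂ) =
      -Complex.I * ∫ w : ℝ × ℝ, ((gfun (s * a⁻¹) (s * (a * b⁻¹)) σ c d w : ℝ) : ℂ) *
        ft2 (fun p => (Ω p : ℂ)) w.1 w.2 *
        Complex.exp (Complex.I * ((P.1 * w.1 + P.2 * w.2 : ℝ) : ℂ)) := by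
    intro s
    rw [← integral_const_mul]
    congr 1
    ext w
    have hg : gfun (s * a⁻¹) (s * (a * b⁻¹)) σ c d w =
        (c * (w.1 - σ * w.2) + d * w.2) * Real.exp (-(s * q w)) := by
      unfold gfun; rw [hq]; congr 2; ring
    have hhw : h w = -Complex.I * ((c * (w.1 - σ * w.2) + d * w.2 : ℝ) : ℂ) / ((q w : ℝ) : ℂ) *
        ft2 (fun p => (Ω p : ℂ)) w.1 w.2 *
        Complex.exp (Complex.I * ((P.1 * w.1 + P.2 * w.2 : ℝ) : ℂ)) := rfl
    rw [hg, hhw]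
    by_cases hw : q w = 0
    · have h1 : 0 ≤ a⁻¹ * (w.1 - σ * w.2) ^ 2 := by positivity
      have h2 : 0 ≤ a * b⁻¹ * w.2 ^ 2 := by positivity
      have h3 : a⁻¹ * (w.1 - σ * w.2) ^ 2 + a * b⁻¹ * w.2 ^ 2 = 0 := hw
      have h4 : a⁻¹ * (w.1 - σ * w.2) ^ 2 = 0 := by linarith
      have h5 : a * b⁻¹ * w.2 ^ 2 = 0 := by linarith
      have h6 : w.1 - σ * w.2 = 0 := by
        rcases mul_eq_zero.1 h4 with h | h
        · exact absurd h (by positivity)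
        · exact pow_eq_zero_iff (by norm_num) |>.1 h
      have h7 : w.2 = 0 := by
        rcases mul_eq_zero.1 h5 with h | h
        · exact absurd h (by positivity)
        · exact pow_eq_zero_iff (by norm_num) |>.1 h
      rw [hw, h6, h7]; simp
    · have hw' : ((q w : ℝ) : ℂ) ≠ 0 := by exact_mod_cast hw
      rw [Complex.ofReal_mul (q w), Complex.ofReal_mul _ (Real.exp (-(s * q w)))]
      generalize ((Real.exp (-(s * q w)) : ℝ) : ℂ) = E
      generalize Complex.exp (Complex.I * ((P.1 * w.1 + P.2 * w.2 : ℝ) : ℂ)) = F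
      field_simp
  simp_rw [hs]
  set M := 8 * Real.pi ^ 2 * (c * Real.sqrt a + d * Real.sqrt (b / a)) with hM
  have hM0 : 0 ≤ M := by positivity
  have hκ : 0 < Real.sqrt b := Real.sqrt_pos.2 hb
  set N := (eLpNorm (fun p => Ω p) (ENNReal.ofReal r)).toReal
  set N' := (eLpNorm (fun p => Ω p) (ENNReal.ofReal r')).toReal
  have hN : 0 ≤ N := ENNReal.toReal_nonneg
  have hN' : 0 ≤ N' := ENNReal.toReal_nonneg
  refine (time_integral hδ (A := M * N * (Real.sqrt b) ^ (1 / 2 - δ))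
    (B := M * N' * (Real.sqrt b) ^ (1 / 2 - -δ)) (by positivity) (by positivity) _ ?_ ?_).trans ?_
  · intro s hs0
    rw [norm_mul, norm_neg, Complex.norm_I, one_mul]
    exact fixed_bound ha hb hs0 σ hc hd P Ω hr hr2
  · intro s hs0
    rw [norm_mul, norm_neg, Complex.norm_I, one_mul]
    exact fixed_bound ha hb hs0 σ hc hd P Ω hr.symm (by rw [hr1]; ring)
  · apply le_of_eq
    congr 1
    rw [show M * N * (Real.sqrt b) ^ (1 / 2 - δ) * (M * N' * (Real.sqrt b) ^ (1 / 2 - -δ)) =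
      M ^ 2 * ((Real.sqrt b) ^ (1 / 2 - δ) * (Real.sqrt b) ^ (1 / 2 - -δ)) * (N * N') by ring,
      ← Real.rpow_add hκ, show (1 / 2 - δ + (1 / 2 - -δ) : ℝ) = 1 by ring, Real.rpow_one,
      Real.sqrt_mul (by positivity), Real.sqrt_mul (by positivity), Real.sqrt_sq hM0]

lemma pre_bound (z : ℂ) : ‖(((2 * Real.pi) ^ (-2 : ℤ) : ℝ) : ℂ) * z‖ ≤ ‖z‖ := by
  have hpre : (0 : ℝ) ≤ (2 * Real.pi) ^ (-2 : ℤ) := by positivity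
  have hpre1 : (2 * Real.pi) ^ (-2 : ℤ) ≤ 1 :=
    zpow_le_one_of_nonpos₀ (by linarith [Real.pi_gt_three]) (by norm_num)
  rw [norm_mul, Complex.norm_real, Real.norm_of_nonneg hpre]
  exact mul_le_of_le_one_left (norm_nonneg _) hpre1

lemma dx_le {t a b σ : ℝ} (ha : a = 1 + t ^ 2 / 3) (hb : b = 1 + t ^ 2 / 12)
    (hσ : σ = t / 2 * (1 + t ^ 2 / 12) ^ (-(1 : ℝ) / 2)) (hσ0 : 0 ≤ σ)
    (P : ℝ × ℝ) (Ω : 𝓢(ℝ × ℝ, ℝ)) {r r' δ : ℝ} (hδ : 0 < δ)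
    (hr : r.HolderConjugate r') (hr1 : 1 / r = 1 / 2 - δ) (hr2 : 1 / r' = 1 / 2 + δ) :
    ‖dxInvLap t (fun p => (Ω p : ℂ)) P‖ ≤
      2 / δ * ((8 * Real.pi ^ 2 * (1 * Real.sqrt a + σ * Real.sqrt (b / a))) *
        Real.sqrt (Real.sqrt b) *
        Real.sqrt ((eLpNorm (fun p => Ω p) (ENNReal.ofReal r)).toReal *
          (eLpNorm (fun p => Ω p) (ENNReal.ofReal r')).toReal)) := by
  have ha0 : 0 < a := by rw [ha]; positivity
  have hb0 : 0 < b := by rw [hb]; positivity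
  refine le_trans (pre_bound _) (le_trans (le_of_eq ?_)
    (main_bound ha0 hb0 σ (c := 1) (d := σ) zero_le_one hσ0 P Ω hδ hr hr1 hr2))
  refine congrArg norm (integral_congr_ae (Filter.Eventually.of_forall fun w => ?_))
  have e : (1 * (w.1 - σ * w.2) + σ * w.2 : ℝ) = w.1 := by ring
  have e2 : qsym t w.1 w.2 = a⁻¹ * (w.1 - σ * w.2) ^ 2 + a * b⁻¹ * w.2 ^ 2 := by
    rw [qsym, ha, hb, hσ]
  simp only [e, e2]

lemma dy_le {t a b σ : ℝ} (ha : a = 1 + t ^ 2 / 3) (hb : b = 1 + t ^ 2 / 12)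
    (hσ : σ = t / 2 * (1 + t ^ 2 / 12) ^ (-(1 : ℝ) / 2))
    (P : ℝ × ℝ) (Ω : 𝓢(ℝ × ℝ, ℝ)) {r r' δ : ℝ} (hδ : 0 < δ)
    (hr : r.HolderConjugate r') (hr1 : 1 / r = 1 / 2 - δ) (hr2 : 1 / r' = 1 / 2 + δ) :
    ‖dyInvLap t (fun p => (Ω p : ℂ)) P‖ ≤
      2 / δ * ((8 * Real.pi ^ 2 * (0 * Real.sqrt a + 1 * Real.sqrt (b / a))) *
        Real.sqrt (Real.sqrt b) *
        Real.sqrt ((eLpNorm (fun p => Ω p) (ENNReal.ofReal r)).toReal *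
          (eLpNorm (fun p => Ω p) (ENNReal.ofReal r')).toReal)) := by
  have ha0 : 0 < a := by rw [ha]; positivity
  have hb0 : 0 < b := by rw [hb]; positivity
  refine le_trans (pre_bound _) (le_trans (le_of_eq ?_)
    (main_bound ha0 hb0 σ (c := 0) (d := 1) le_rfl zero_le_one P Ω hδ hr hr1 hr2))
  refine congrArg norm (integral_congr_ae (Filter.Eventually.of_forall fun w => ?_))
  have e : (0 * (w.1 - σ * w.2) + 1 * w.2 : ℝ) = w.2 := by ring
  have e2 : qsym t w.1 w.2 = a⁻¹ * (w.1 - σ * w.2) ^ 2 + a * b⁻¹ * w.2 ^ 2 := by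
    rw [qsym, ha, hb, hσ]
  simp only [e, e2]

lemma schwartz_ofReal (Ω : 𝓢(ℝ × ℝ, ℝ)) (p : ℝ≥0∞) :
    eLpNorm (fun x => Ω x) p = ENNReal.ofReal (eLpNorm (fun x => Ω x) p).toReal := by
  have h : MemLp (fun x => Ω x) p := Ω.memLp p
  rw [ENNReal.ofReal_toReal h.eLpNorm_ne_top]

/-- Lemma 3.1 (first part): for `m > 1` there is `C = C(m) > 0` such that for all `t > 2` and
Schwartz `Ω`, `‖∂_X Δ_t⁻¹ Ω‖_{L^∞} + ⟨t⟩ ‖∂_Y Δ_t⁻¹ Ω‖_{L^∞} ≤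
C ⟨t⟩^{3/2} ‖Ω‖_{L^{2m/(m-1)}}^{1/2} ‖Ω‖_{L^{2m/(m+1)}}^{1/2}`. -/
theorem stmt_9 (m : ℝ) (hm : 1 < m) :
    ∃ C : ℝ, 0 < C ∧
      ∀ t : ℝ, 2 < t →
        ∀ Ω : 𝓢(ℝ × ℝ, ℝ),
          eLpNorm (dxInvLap t (fun p => (Ω p : ℂ))) ⊤ +
              ENNReal.ofReal (Real.sqrt (1 + t ^ 2)) *
                eLpNorm (dyInvLap t (fun p => (Ω p : ℂ))) ⊤ ≤
            ENNReal.ofReal (C * Real.sqrt (1 + t ^ 2) ^ ((3 : ℝ) / 2)) *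
              eLpNorm (fun p => Ω p) (ENNReal.ofReal (2 * m / (m - 1))) ^ ((1 : ℝ) / 2) *
              eLpNorm (fun p => Ω p) (ENNReal.ofReal (2 * m / (m + 1))) ^ ((1 : ℝ) / 2) := by
  have hm0 : 0 < m := by linarith
  have hm1 : 0 < m - 1 := by linarith
  obtain ⟨r, hr⟩ : ∃ z, z = 2 * m / (m - 1) := ⟨_, rfl⟩
  obtain ⟨r', hr'⟩ : ∃ z, z = 2 * m / (m + 1) := ⟨_, rfl⟩
  obtain ⟨δ, hδ⟩ : ∃ z, z = 1 / (2 * m) := ⟨_, rfl⟩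
  rw [← hr, ← hr']
  have hδ0 : 0 < δ := by rw [hδ]; positivity
  have hr1 : 1 / r = 1 / 2 - δ := by rw [hr, hδ]; field_simp
  have hr2 : 1 / r' = 1 / 2 + δ := by rw [hr', hδ]; field_simp
  have hconj : r.HolderConjugate r' := by
    rw [Real.holderConjugate_iff]
    constructor
    · rw [hr, lt_div_iff₀ hm1]; linarith
    · rw [← one_div, ← one_div, hr1, hr2]; ring
  have hpi := Real.pi_pos
  refine ⟨3 * (2 / δ * (8 * Real.pi ^ 2)), by positivity, fun t ht Ω => ?_⟩
  obtain ⟨J, hJ⟩ : ∃ z, z = Real.sqrt (1 + t ^ 2) := ⟨_, rfl⟩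
  rw [← hJ]
  have hJ1 : 1 ≤ J := by rw [hJ]; apply Real.one_le_sqrt.2; nlinarith
  have hJt : t ≤ J := hJ ▸ Real.le_sqrt_of_sq_le (by linarith)
  obtain ⟨N, hN⟩ : ∃ z, z = (eLpNorm (fun p => Ω p) (ENNReal.ofReal r)).toReal := ⟨_, rfl⟩
  obtain ⟨N', hN'⟩ : ∃ z, z = (eLpNorm (fun p => Ω p) (ENNReal.ofReal r')).toReal := ⟨_, rfl⟩
  have hN0 : 0 ≤ N := hN ▸ ENNReal.toReal_nonneg
  have hN0' : 0 ≤ N' := hN' ▸ ENNReal.toReal_nonneg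
  have hNe : eLpNorm (fun p => Ω p) (ENNReal.ofReal r) = ENNReal.ofReal N := by
    rw [hN]; exact schwartz_ofReal Ω _
  have hNe' : eLpNorm (fun p => Ω p) (ENNReal.ofReal r') = ENNReal.ofReal N' := by
    rw [hN']; exact schwartz_ofReal Ω _
  obtain ⟨a, ha⟩ : ∃ z, z = 1 + t ^ 2 / 3 := ⟨_, rfl⟩
  obtain ⟨b, hb⟩ : ∃ z, z = 1 + t ^ 2 / 12 := ⟨_, rfl⟩
  have ha0 : 0 < a := by rw [ha]; positivity
  have hb0 : 0 < b := by rw [hb]; positivity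
  have hb1 : 1 ≤ b := by rw [hb]; nlinarith
  obtain ⟨σ, hσ⟩ : ∃ z, z = t / 2 * (1 + t ^ 2 / 12) ^ (-(1 : ℝ) / 2) := ⟨_, rfl⟩
  have hσ0 : 0 ≤ σ := by rw [hσ]; positivity
  have hσt : σ ≤ t := by
    have h1 : b ^ (-(1 : ℝ) / 2) ≤ 1 := Real.rpow_le_one_of_one_le_of_nonpos hb1 (by norm_num)
    have h2 : 0 ≤ b ^ (-(1 : ℝ) / 2) := by positivity
    rw [hσ, ← hb]; nlinarith
  have hsa : Real.sqrt a ≤ J := hJ ▸ Real.sqrt_le_sqrt (by rw [ha]; nlinarith)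
  have hsba : Real.sqrt (b / a) ≤ 1 := by
    rw [Real.sqrt_le_one, div_le_one ha0, ha, hb]; nlinarith
  have hsb : Real.sqrt (Real.sqrt b) ≤ J ^ (1 / 2 : ℝ) := by
    rw [← Real.sqrt_eq_rpow, hJ]
    exact Real.sqrt_le_sqrt (Real.sqrt_le_sqrt (by rw [hb]; nlinarith))
  obtain ⟨G, hG⟩ : ∃ z, z = 2 / δ * (8 * Real.pi ^ 2) * J ^ (1 / 2 : ℝ) * Real.sqrt (N * N') := ⟨_, rfl⟩
  have hG0 : 0 ≤ G := by rw [hG]; positivity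
  have hx : ∀ P, ‖dxInvLap t (fun p => (Ω p : ℂ)) P‖ ≤ 2 * J * G := by
    intro P
    refine (dx_le ha hb hσ hσ0 P Ω hδ0 hconj hr1 hr2).trans ?_
    rw [← hN, ← hN']
    have hk : 1 * Real.sqrt a + σ * Real.sqrt (b / a) ≤ 2 * J := by
      have : σ * Real.sqrt (b / a) ≤ σ * 1 := by gcongr
      linarith
    calc _ ≤ 2 / δ * ((8 * Real.pi ^ 2 * (2 * J)) * J ^ (1 / 2 : ℝ) * Real.sqrt (N * N')) := by
          gcongr
      _ = _ := by rw [hG]; ring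
  have hy : ∀ P, ‖dyInvLap t (fun p => (Ω p : ℂ)) P‖ ≤ G := by
    intro P
    refine (dy_le ha hb hσ P Ω hδ0 hconj hr1 hr2).trans ?_
    rw [← hN, ← hN']
    have hk : 0 * Real.sqrt a + 1 * Real.sqrt (b / a) ≤ 1 := by linarith
    calc _ ≤ 2 / δ * ((8 * Real.pi ^ 2 * 1) * J ^ (1 / 2 : ℝ) * Real.sqrt (N * N')) := by
          gcongr
      _ = _ := by rw [hG]; ring
  rw [eLpNorm_exponent_top, eLpNorm_exponent_top]
  have hX := eLpNormEssSup_le_of_ae_bound (μ := (volume : Measure (ℝ × ℝ)))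
    (Filter.Eventually.of_forall hx)
  have hY := eLpNormEssSup_le_of_ae_bound (μ := (volume : Measure (ℝ × ℝ)))
    (Filter.Eventually.of_forall hy)
  have hJ0 : 0 < J := by linarith
  calc _ ≤ ENNReal.ofReal (2 * J * G) + ENNReal.ofReal J * ENNReal.ofReal G := by gcongr
    _ = ENNReal.ofReal (3 * (2 / δ * (8 * Real.pi ^ 2)) * J ^ ((3 : ℝ) / 2) *
          N ^ ((1 : ℝ) / 2) * N' ^ ((1 : ℝ) / 2)) := by
      rw [← ENNReal.ofReal_mul hJ0.le, ← ENNReal.ofReal_add (by positivity) (by positivity)]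
      congr 1
      rw [hG, Real.sqrt_eq_rpow, Real.mul_rpow hN0 hN0',
        show (3 : ℝ) / 2 = 1 + 1 / 2 by norm_num, Real.rpow_add hJ0, Real.rpow_one]
      ring
    _ = _ := by
      rw [hNe, hNe', ENNReal.ofReal_rpow_of_nonneg hN0 (by norm_num),
        ENNReal.ofReal_rpow_of_nonneg hN0' (by norm_num), ← ENNReal.ofReal_mul (by positivity),
        ← ENNReal.ofReal_mul (by positivity)]
end

section
/- Let 0<σ<1/2. There is a constant C = C(σ) > 0 such that for every t>0 and every Schwartz function f on ℝ², ‖∂_X Δ_t^{-1} f‖_{L^∞(ℝ²)} + ⟨t⟩ ‖∂_Y Δ_t^{-1} f‖_{L^∞(ℝ²)} ≤ C ⟨t⟩^{1+σ} ‖f‖_{L²(1)}^{1/2+σ} ‖∂_X f‖_{L²(1)}^{1/2−σ}. -/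
open MeasureTheory SchwartzMap
open scoped ENNReal

/-- The weighted norm `‖f‖_{L²(m)} = ‖⟨X,Y⟩^m f‖_{L²(ℝ²)}`, `⟨X,Y⟩ = (1+X²+Y²)^{1/2}`. -/
noncomputable def wnorm {E : Type*} [NormedAddCommGroup E] (m : ℝ) (f : ℝ × ℝ → E) : ℝ≥0∞ :=
  eLpNorm (fun p => (1 + p.1 ^ 2 + p.2 ^ 2) ^ (m / 2) * ‖f p‖) 2

/-- The partial derivative `∂_X f`. -/
noncomputable def pderivX (f : ℝ × ℝ → ℝ) : ℝ × ℝ → ℝ :=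
  fun p => deriv (fun x => f (x, p.2)) p.1

open FourierTransform in
theorem fourier_L1_L2_ae (g : ℝ → ℂ) (h1 : Integrable g) (h2 : MemLp g 2) :
    ((𝓕 (h2.toLp g) : Lp ℂ 2 (volume : Measure ℝ)) : ℝ → ℂ) =ᵐ[volume] 𝓕 g := by
  have hc : Continuous (𝓕 g) := VectorFourier.fourierIntegral_continuous Real.continuous_fourierChar
    (by exact continuous_inner) h1
  apply ae_eq_of_integral_contDiff_smul_eq
  · exact (Lp.memLp _).locallyIntegrable (by norm_num)
  · exact hc.locallyIntegrable
  intro φ hφ hs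
  have hφ' : ContDiff ℝ (⊤ : ℕ∞) (fun x => (φ x : ℂ)) := Complex.ofRealCLM.contDiff.comp hφ
  have hs' : HasCompactSupport (fun x => (φ x : ℂ)) := hs.comp_left (g := Complex.ofReal) (by simp)
  set ψ : 𝓢(ℝ, ℂ) := hs'.toSchwartzMap hφ'
  have e1 := congrArg (fun T : 𝓢'(ℝ, ℂ) => T ψ) (Lp.fourier_toTemperedDistribution_eq (h2.toLp g))
  simp only [TemperedDistribution.fourier_apply, Lp.toTemperedDistribution_apply] at e1
  have e2 : ∫ x, (𝓕 ψ) x • (h2.toLp g) x = ∫ x, (𝓕 ψ) x • g x := by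
    apply integral_congr_ae
    filter_upwards [h2.coeFn_toLp] with x hx
    rw [hx]
  have e3 : ∫ x, (𝓕 ψ) x • g x = ∫ x, ψ x • (𝓕 g) x := by
    have := VectorFourier.integral_fourierIntegral_smul_eq_flip (e := Real.fourierChar) (L := innerₗ ℝ)
      (μ := volume) (ν := volume) (f := ψ) (g := g) Real.continuous_fourierChar
      (by exact continuous_inner) ψ.integrable h1
    rw [flip_innerₗ] at this
    exact this
  rw [e2, e3] at e1
  simpa [ψ] using e1.symm

noncomputable def FT1 (g : ℝ → ℂ) (ξ : ℝ) : ℂ :=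
  ∫ x, g x * Complex.exp (-Complex.I * ((x * ξ : ℝ) : ℂ))

open FourierTransform in
theorem FT1_eq (g : ℝ → ℂ) (ξ : ℝ) : FT1 g ξ = 𝓕 g ((2 * Real.pi)⁻¹ * ξ) := by
  rw [Real.fourier_real_eq_integral_exp_smul, FT1]
  congr 1; ext x
  rw [smul_eq_mul, mul_comm]
  congr 2
  have : (Real.pi : ℂ) ≠ 0 := by exact_mod_cast Real.pi_ne_zero
  push_cast
  field_simp

theorem sq_eLpNorm_two {α E : Type*} [MeasurableSpace α] {μ : Measure α} [NormedAddCommGroup E]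
    (h : α → E) : eLpNorm h 2 μ ^ 2 = ∫⁻ x, ‖h x‖ₑ ^ 2 ∂μ := by
  rw [eLpNorm_eq_lintegral_rpow_enorm_toReal (by norm_num) (by norm_num), ← ENNReal.rpow_natCast,
    ← ENNReal.rpow_mul]
  norm_num

open FourierTransform in
theorem plancherel1 (g : ℝ → ℂ) (h1 : Integrable g) (h2 : MemLp g 2) :
    ∫⁻ ξ, ‖FT1 g ξ‖ₑ ^ 2 = ENNReal.ofReal (2 * Real.pi) * ∫⁻ x, ‖g x‖ₑ ^ 2 := by
  have a : ∫⁻ x, ‖(𝓕 g) x‖ₑ ^ 2 = ∫⁻ x, ‖g x‖ₑ ^ 2 := by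
    have b := Lp.norm_fourier_eq (h2.toLp g)
    have b2 : ‖(𝓕 (h2.toLp g) : Lp ℂ 2 (volume : Measure ℝ))‖ₑ = ‖h2.toLp g‖ₑ := by
      rw [← ofReal_norm, ← ofReal_norm, b]
    rw [Lp.enorm_def, Lp.enorm_def, eLpNorm_congr_ae h2.coeFn_toLp,
      eLpNorm_congr_ae (fourier_L1_L2_ae g h1 h2)] at b2
    have := congrArg (fun z => z ^ 2) b2
    have k : ∀ h : ℝ → ℂ, eLpNorm h 2 volume ^ 2 = ∫⁻ x, ‖h x‖ₑ ^ 2 := fun h => sq_eLpNorm_two h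
    simpa only [k] using this
  have hpi : (2 * Real.pi)⁻¹ ≠ 0 := by positivity
  calc _ = ∫⁻ ξ, ‖(𝓕 g) ((2 * Real.pi)⁻¹ * ξ)‖ₑ ^ 2 := by simp_rw [FT1_eq]
    _ = ∫⁻ y, ‖(𝓕 g) y‖ₑ ^ 2 ∂(Measure.map (fun ξ => (2 * Real.pi)⁻¹ * ξ) volume) := by
        rw [(measurableEmbedding_mulLeft₀ hpi).lintegral_map]
    _ = _ := by
        rw [Real.map_volume_mul_left hpi, lintegral_smul_measure, a, inv_inv, abs_of_pos (by positivity)]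
        rfl

theorem cs_half {α : Type*} [MeasurableSpace α] (μ : Measure α) {f g : α → ℝ≥0∞}
    (hf : AEMeasurable f μ) (hg : AEMeasurable g μ) :
    ∫⁻ a, f a * g a ∂μ ≤ (∫⁻ a, f a ^ 2 ∂μ) ^ ((1 : ℝ) / 2) * (∫⁻ a, g a ^ 2 ∂μ) ^ ((1 : ℝ) / 2) := by
  have := ENNReal.lintegral_mul_le_Lp_mul_Lq μ (p := 2) (q := 2) (by constructor <;> norm_num) hf hg
  simpa using this

theorem cs_sq {α : Type*} [MeasurableSpace α] (μ : Measure α) {f g : α → ℝ≥0∞}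
    (hf : AEMeasurable f μ) (hg : AEMeasurable g μ) :
    (∫⁻ a, f a * g a ∂μ) ^ 2 ≤ (∫⁻ a, f a ^ 2 ∂μ) * (∫⁻ a, g a ^ 2 ∂μ) := by
  calc _ ≤ ((∫⁻ a, f a ^ 2 ∂μ) ^ ((1 : ℝ) / 2) * (∫⁻ a, g a ^ 2 ∂μ) ^ ((1 : ℝ) / 2)) ^ 2 := by
        gcongr; exact cs_half μ hf hg
    _ = _ := by
        rw [mul_pow, ← ENNReal.rpow_natCast, ← ENNReal.rpow_natCast, ← ENNReal.rpow_mul,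
          ← ENNReal.rpow_mul]; norm_num

theorem lint_inv_sq : ∫⁻ y : ℝ, ENNReal.ofReal ((1 + y ^ 2)⁻¹) = ENNReal.ofReal Real.pi := by
  rw [← ofReal_integral_eq_lintegral_ofReal integrable_inv_one_add_sq
    (Filter.Eventually.of_forall fun y => by positivity), integral_univ_inv_one_add_sq]

theorem norm_exp_fac (a : ℝ) : ‖Complex.exp (-Complex.I * (a : ℂ))‖ = 1 := by
  rw [show -Complex.I * (a : ℂ) = ((-a : ℝ) : ℂ) * Complex.I by push_cast; ring]
  exact Complex.norm_exp_ofReal_mul_I _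

theorem norm_exp_fac' (a : ℝ) : ‖Complex.exp (Complex.I * (a : ℂ))‖ = 1 := by
  rw [show Complex.I * (a : ℂ) = (a : ℂ) * Complex.I by ring]
  exact Complex.norm_exp_ofReal_mul_I _

structure Nice (F : ℝ × ℝ → ℂ) (K : ℝ) : Prop where
  cont : Continuous F
  bd : ∀ x y, ‖F (x, y)‖ ≤ K * ((1 + x ^ 2)⁻¹ * (1 + y ^ 2)⁻¹)

/-- squared weighted norm -/
noncomputable def W2 (F : ℝ × ℝ → ℂ) : ℝ≥0∞ :=
  ∫⁻ p : ℝ × ℝ, ENNReal.ofReal (1 + p.1 ^ 2 + p.2 ^ 2) * ‖F p‖ₑ ^ 2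

theorem dec_sq_le (x : ℝ) : (1 + x ^ 2)⁻¹ ≤ 1 := inv_le_one_of_one_le₀ (by nlinarith)

theorem dec_memLp {g : ℝ → ℂ} (hg : AEStronglyMeasurable g) (K : ℝ)
    (h : ∀ x, ‖g x‖ ≤ K * (1 + x ^ 2)⁻¹) : Integrable g ∧ MemLp g 2 := by
  have h1 : Integrable g := (integrable_inv_one_add_sq.const_mul K).mono' hg
    (Filter.Eventually.of_forall h)
  refine ⟨h1, ?_⟩
  rw [memLp_two_iff_integrable_sq_norm hg]
  refine (h1.norm.mul_const K).mono' (by fun_prop) (Filter.Eventually.of_forall fun x => ?_)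
  have := h x
  have h2 := dec_sq_le x
  have h3 : 0 ≤ ‖g x‖ := norm_nonneg _
  have h4 : 0 < (1 + x ^ 2)⁻¹ := by positivity
  have h5 : 0 ≤ K := by
    by_contra hh
    push Not at hh
    nlinarith
  have : ‖g x‖ ≤ K := by nlinarith
  rw [Real.norm_of_nonneg (by positivity)]
  nlinarith

namespace Nice
variable {F : ℝ × ℝ → ℂ} {K : ℝ}

theorem K_nonneg (h : Nice F K) : 0 ≤ K := by
  have := (norm_nonneg _).trans (h.bd 0 0)
  simpa using this

theorem integrable (h : Nice F K) : Integrable F := by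
  have := (integrable_inv_one_add_sq.mul_prod integrable_inv_one_add_sq).const_mul K
  exact this.mono' h.cont.aestronglyMeasurable (Filter.Eventually.of_forall fun p => h.bd p.1 p.2)

theorem slice (h : Nice F K) (x : ℝ) :
    Integrable (fun y => F (x, y)) ∧ MemLp (fun y => F (x, y)) 2 := by
  have := h.cont
  refine dec_memLp (by fun_prop) K fun y => (h.bd x y).trans ?_
  have h1 := dec_sq_le x
  have h2 : 0 < (1 + y ^ 2)⁻¹ := by positivity
  have := h.K_nonneg
  gcongr
  nlinarith

theorem sm (h : Nice F K) :
    StronglyMeasurable (fun w : ℝ × ℝ => FT1 (fun y => F (w.1, y)) w.2) := by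
  have := h.cont
  unfold FT1
  apply StronglyMeasurable.integral_prod_right (f := fun (w : ℝ × ℝ) (y : ℝ) =>
    F (w.1, y) * Complex.exp (-Complex.I * ((y * w.2 : ℝ) : ℂ)))
  apply Continuous.stronglyMeasurable
  unfold Function.uncurry
  fun_prop

theorem g_nice (h : Nice F K) (η : ℝ) : Integrable (fun x => FT1 (fun y => F (x, y)) η) ∧
    MemLp (fun x => FT1 (fun y => F (x, y)) η) 2 := by
  refine dec_memLp ?_ (K * Real.pi) fun x => ?_
  · exact (h.sm.comp_measurable (measurable_id.prodMk measurable_const)).aestronglyMeasurable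
  · unfold FT1
    refine (norm_integral_le_integral_norm _).trans ?_
    calc _ ≤ ∫ y, (K * (1 + x ^ 2)⁻¹) * (1 + y ^ 2)⁻¹ := by
          apply integral_mono_of_nonneg (Filter.Eventually.of_forall fun y => norm_nonneg _)
            (integrable_inv_one_add_sq.const_mul _) (Filter.Eventually.of_forall fun y => ?_)
          simp only [norm_mul, norm_exp_fac, mul_one]
          exact (h.bd x y).trans (by rw [mul_assoc])
      _ = _ := by rw [integral_const_mul, integral_univ_inv_one_add_sq]; ring

theorem ft2_eq (h : Nice F K) (ξ η : ℝ) :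
    ft2 F ξ η = FT1 (fun x => FT1 (fun y => F (x, y)) η) ξ := by
  unfold ft2
  have hc := h.cont
  rw [Measure.volume_eq_prod, integral_prod]
  · unfold FT1
    congr 1; ext x
    rw [← integral_mul_const]
    congr 1; ext y
    rw [mul_assoc, ← Complex.exp_add]
    congr 2
    push_cast; ring
  · refine h.integrable.norm.mono' (by fun_prop) (Filter.Eventually.of_forall fun p => ?_)
    simp only [norm_mul, norm_exp_fac, mul_one]; rfl

theorem ft2_meas (h : Nice F K) : Measurable (fun w : ℝ × ℝ => ft2 F w.1 w.2) := by
  have := h.cont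
  unfold ft2
  apply StronglyMeasurable.measurable
  apply StronglyMeasurable.integral_prod_right (f := fun (w : ℝ × ℝ) (p : ℝ × ℝ) =>
    F p * Complex.exp (-Complex.I * ((p.1 * w.1 + p.2 * w.2 : ℝ) : ℂ)))
  apply Continuous.stronglyMeasurable
  unfold Function.uncurry
  fun_prop

theorem FT1_bd (h : Nice F K) (x η : ℝ) : ‖FT1 (fun y => F (x, y)) η‖ₑ ^ 2 ≤
    ENNReal.ofReal Real.pi * ∫⁻ y, ENNReal.ofReal (1 + x ^ 2 + y ^ 2) * ‖F (x, y)‖ₑ ^ 2 := by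
  have hc := h.cont
  calc _ ≤ (∫⁻ y, ‖F (x, y)‖ₑ) ^ 2 := by
        gcongr
        refine (enorm_integral_le_lintegral_enorm _).trans (lintegral_mono fun y => ?_)
        rw [enorm_mul, ← ofReal_norm (Complex.exp _), norm_exp_fac]
        simp
    _ = (∫⁻ y, ENNReal.ofReal (Real.sqrt ((1 + y ^ 2)⁻¹)) *
          (ENNReal.ofReal (Real.sqrt (1 + y ^ 2)) * ‖F (x, y)‖ₑ)) ^ 2 := by
        congr 2; ext y
        rw [← mul_assoc, ← ENNReal.ofReal_mul (by positivity), ← Real.sqrt_mul (by positivity),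
          inv_mul_cancel₀ (by positivity)]
        simp
    _ ≤ _ := cs_sq _ (by fun_prop) (by fun_prop)
    _ ≤ _ := by
        simp_rw [mul_pow, ← ENNReal.ofReal_pow (Real.sqrt_nonneg _)]
        gcongr
        · rw [← lint_inv_sq]
          apply lintegral_mono fun y => ?_
          rw [Real.sq_sqrt (by positivity)]
        · rw [Real.sq_sqrt (by positivity)]
          nlinarith

theorem sup_bd (h : Nice F K) (η : ℝ) : ∫⁻ ξ, ‖ft2 F ξ η‖ₑ ^ 2 ≤ 40 * W2 F := by
  have hc := h.cont
  simp_rw [h.ft2_eq]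
  rw [plancherel1 _ (h.g_nice η).1 (h.g_nice η).2]
  calc _ ≤ ENNReal.ofReal (2 * Real.pi) * ∫⁻ x, (ENNReal.ofReal Real.pi *
          ∫⁻ y, ENNReal.ofReal (1 + x ^ 2 + y ^ 2) * ‖F (x, y)‖ₑ ^ 2) := by
        gcongr
        exact h.FT1_bd _ η
    _ = ENNReal.ofReal (2 * Real.pi) * ENNReal.ofReal Real.pi * W2 F := by
        rw [lintegral_const_mul' _ _ ENNReal.ofReal_ne_top, W2, Measure.volume_eq_prod,
          lintegral_prod _ (by fun_prop), mul_assoc]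
    _ ≤ _ := by
        gcongr
        rw [← ENNReal.ofReal_mul (by positivity)]
        rw [ENNReal.ofReal_le_iff_le_toReal (by simp)]
        have := Real.pi_lt_d2
        have := Real.pi_pos
        simp
        nlinarith

theorem l2_bd (h : Nice F K) : ∫⁻ η, ∫⁻ ξ, ‖ft2 F ξ η‖ₑ ^ 2 ≤ 40 * W2 F := by
  have hc := h.cont
  simp_rw [h.ft2_eq]
  calc _ = ∫⁻ η, ENNReal.ofReal (2 * Real.pi) * ∫⁻ x, ‖FT1 (fun y => F (x, y)) η‖ₑ ^ 2 := by
        congr 1; ext η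
        rw [plancherel1 _ (h.g_nice η).1 (h.g_nice η).2]
    _ = ENNReal.ofReal (2 * Real.pi) * ∫⁻ x, ∫⁻ η, ‖FT1 (fun y => F (x, y)) η‖ₑ ^ 2 := by
        rw [lintegral_const_mul' _ _ ENNReal.ofReal_ne_top, lintegral_lintegral_swap]
        have := h.sm.measurable.enorm.pow_const 2
        exact (this.comp measurable_swap).aemeasurable
    _ = ENNReal.ofReal (2 * Real.pi) * ∫⁻ x, ENNReal.ofReal (2 * Real.pi) *
          ∫⁻ y, ‖F (x, y)‖ₑ ^ 2 := by
        congr 2; ext x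
        rw [plancherel1 _ (h.slice x).1 (h.slice x).2]
    _ ≤ ENNReal.ofReal (2 * Real.pi) * (ENNReal.ofReal (2 * Real.pi) * W2 F) := by
        rw [lintegral_const_mul' _ _ ENNReal.ofReal_ne_top, W2, Measure.volume_eq_prod,
          lintegral_prod _ (by fun_prop)]
        gcongr with x y
        apply le_mul_of_one_le_left (by simp)
        rw [ENNReal.one_le_ofReal]
        nlinarith
    _ ≤ _ := by
        rw [← mul_assoc]
        gcongr
        rw [← ENNReal.ofReal_mul (by positivity)]
        rw [ENNReal.ofReal_le_iff_le_toReal (by simp)]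
        have := Real.pi_lt_d2
        have := Real.pi_pos
        simp
        nlinarith

theorem W2_lt_top (h : Nice F K) : W2 F < ⊤ := by
  have hi := (integrable_inv_one_add_sq.mul_prod integrable_inv_one_add_sq).const_mul (K ^ 2)
  refine lt_of_le_of_lt ?_ hi.lintegral_lt_top
  apply lintegral_mono fun p => ?_
  dsimp only
  have h1 := h.bd p.1 p.2
  have := h.K_nonneg
  rw [← ofReal_norm, ← ENNReal.ofReal_pow (norm_nonneg _), ← ENNReal.ofReal_mul (by positivity)]
  apply ENNReal.ofReal_le_ofReal
  calc _ ≤ ((1 + p.1 ^ 2) * (1 + p.2 ^ 2)) * (K * ((1 + p.1 ^ 2)⁻¹ * (1 + p.2 ^ 2)⁻¹)) ^ 2 := by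
        gcongr
        · nlinarith [mul_nonneg (sq_nonneg p.1) (sq_nonneg p.2)]
    _ = _ := by field_simp

end Nice

theorem lint_abs (φ : ℝ → ℝ≥0∞) : ∫⁻ x, φ |x| = 2 * ∫⁻ x in Set.Ioi (0 : ℝ), φ x := by
  have h1 : ∫⁻ x in Set.Ioi (0 : ℝ), φ |x| = ∫⁻ x in Set.Ioi (0 : ℝ), φ x :=
    setLIntegral_congr_fun measurableSet_Ioi fun x hx => by
      rw [abs_of_pos hx]
  have h2 : ∫⁻ x in Set.Iio (0 : ℝ), φ |x| = ∫⁻ x in Set.Ioi (0 : ℝ), φ |x| := by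
    have := (Measure.measurePreserving_neg (volume : Measure ℝ)).setLIntegral_comp_preimage_emb
      (MeasurableEquiv.neg ℝ).measurableEmbedding (fun x => φ |x|) (Set.Ioi 0)
    simpa using this
  have h3 : ∫⁻ x in Set.Iic (0 : ℝ), φ |x| = ∫⁻ x in Set.Iio (0 : ℝ), φ |x| :=
    setLIntegral_congr Iio_ae_eq_Iic.symm
  rw [← lintegral_add_compl _ (measurableSet_Ioi (a := (0 : ℝ))), Set.compl_Ioi, h3, h2, h1, two_mul]

theorem lint_small {s A : ℝ} (hs : -1 < s) (hA : 0 < A) :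
    ∫⁻ x in {x : ℝ | |x| ≤ A}, ENNReal.ofReal (|x| ^ s) =
      ENNReal.ofReal (2 / (s + 1) * A ^ (s + 1)) := by
  have hm : MeasurableSet {x : ℝ | |x| ≤ A} := measurableSet_le (by fun_prop) (by fun_prop)
  have h1 : ∀ x : ℝ, Set.indicator {x : ℝ | |x| ≤ A} (fun x => ENNReal.ofReal (|x| ^ s)) x =
      Set.indicator (Set.Iic A) (fun x => ENNReal.ofReal (x ^ s)) |x| := fun x => by
    simp [Set.indicator_apply]
  rw [← lintegral_indicator hm]
  simp_rw [h1]
  rw [lint_abs, setLIntegral_indicator measurableSet_Iic, Set.inter_comm, Set.Ioi_inter_Iic,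
    ← ofReal_integral_eq_lintegral_ofReal, ← intervalIntegral.integral_of_le hA.le,
    integral_rpow (Or.inl hs), Real.zero_rpow (by linarith)]
  · rw [← ENNReal.ofReal_ofNat 2, ← ENNReal.ofReal_mul (by norm_num)]
    congr 1; ring
  · exact (intervalIntegrable_iff_integrableOn_Ioc_of_le hA.le).1
      (intervalIntegral.intervalIntegrable_rpow' hs)
  · filter_upwards [ae_restrict_mem measurableSet_Ioc] with x hx
    exact Real.rpow_nonneg hx.1.le _

theorem lint_large {s A : ℝ} (hs : s < -1) (hA : 0 < A) :
    ∫⁻ x in {x : ℝ | |x| ≤ A}ᶜ, ENNReal.ofReal (|x| ^ s) =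
      ENNReal.ofReal (2 / (-s - 1) * A ^ (s + 1)) := by
  have hm : MeasurableSet {x : ℝ | |x| ≤ A} := measurableSet_le (by fun_prop) (by fun_prop)
  have h1 : ∀ x : ℝ, Set.indicator {x : ℝ | |x| ≤ A}ᶜ (fun x => ENNReal.ofReal (|x| ^ s)) x =
      Set.indicator (Set.Ioi A) (fun x => ENNReal.ofReal (x ^ s)) |x| := fun x => by
    simp [Set.indicator_apply]
  rw [← lintegral_indicator hm.compl]
  simp_rw [h1]
  rw [lint_abs, setLIntegral_indicator measurableSet_Ioi, Set.Ioi_inter_Ioi, sup_of_le_left hA.le,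
    ← ofReal_integral_eq_lintegral_ofReal, integral_Ioi_rpow_of_lt hs hA]
  · rw [← ENNReal.ofReal_ofNat 2, ← ENNReal.ofReal_mul (by norm_num)]
    congr 1
    have : s + 1 ≠ 0 := by linarith
    have : -s - 1 ≠ 0 := by linarith
    field_simp
    ring
  · exact integrableOn_Ioi_rpow_of_lt hs hA
  · filter_upwards [ae_restrict_mem measurableSet_Ioi] with x hx
    exact Real.rpow_nonneg (hA.le.trans (le_of_lt hx)) _

theorem ofReal_rpow_sq (x s : ℝ) : ENNReal.ofReal (|x| ^ s) ^ 2 = ENNReal.ofReal (|x| ^ (2 * s)) := by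
  rw [← ENNReal.ofReal_pow (by positivity), mul_comm 2 s, Real.rpow_mul (abs_nonneg x)]
  norm_num

theorem small_half {s A : ℝ} (hs : -1 < 2 * s) (hA : 0 < A) :
    (∫⁻ x in {x : ℝ | |x| ≤ A}, ENNReal.ofReal (|x| ^ s) ^ 2) ^ ((1 : ℝ) / 2) =
      ENNReal.ofReal ((2 / (2 * s + 1)) ^ ((1 : ℝ) / 2) * A ^ (s + 1 / 2)) := by
  simp_rw [ofReal_rpow_sq]
  have : 0 < 2 * s + 1 := by linarith
  rw [lint_small hs hA, ENNReal.ofReal_rpow_of_nonneg (by positivity) (by norm_num),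
    Real.mul_rpow (by positivity) (by positivity), ← Real.rpow_mul hA.le]
  congr 3; ring

theorem large_half {s A : ℝ} (hs : 2 * s < -1) (hA : 0 < A) :
    (∫⁻ x in {x : ℝ | |x| ≤ A}ᶜ, ENNReal.ofReal (|x| ^ s) ^ 2) ^ ((1 : ℝ) / 2) =
      ENNReal.ofReal ((2 / (-(2 * s) - 1)) ^ ((1 : ℝ) / 2) * A ^ (s + 1 / 2)) := by
  simp_rw [ofReal_rpow_sq]
  have : 0 < -(2 * s) - 1 := by linarith
  rw [lint_large hs hA, ENNReal.ofReal_rpow_of_nonneg (by positivity) (by norm_num),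
    Real.mul_rpow (by positivity) (by positivity), ← Real.rpow_mul hA.le]
  congr 3; ring

theorem key_xi {σ A : ℝ} (hσ : 0 < σ) (hσ' : σ < 1 / 2) (hA : 0 < A) {u : ℝ → ℝ≥0∞}
    (hu : Measurable u) :
    ∫⁻ x, ENNReal.ofReal (|x| ^ (-σ)) * u x ≤
      ENNReal.ofReal ((2 / (1 - 2 * σ)) ^ ((1 : ℝ) / 2) * A ^ (1 / 2 - σ)) *
        (∫⁻ x, u x ^ 2) ^ ((1 : ℝ) / 2) +
      ENNReal.ofReal ((2 / (1 - 2 * σ)) ^ ((1 : ℝ) / 2) * A ^ (-1 / 2 - σ)) *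
        (∫⁻ x, (ENNReal.ofReal |x| * u x) ^ 2) ^ ((1 : ℝ) / 2) := by
  have hm : MeasurableSet {x : ℝ | |x| ≤ A} := measurableSet_le (by fun_prop) (by fun_prop)
  rw [← lintegral_add_compl _ hm]
  gcongr ?_ + ?_
  · refine (cs_half _ (by fun_prop) (by fun_prop)).trans ?_
    rw [small_half (by linarith) hA]
    gcongr ?_ * ?_ ^ _
    · apply le_of_eq
      congr 3
      · ring
      · ring
    · exact setLIntegral_le_lintegral _ _
  · calc _ = ∫⁻ x in {x : ℝ | |x| ≤ A}ᶜ, ENNReal.ofReal (|x| ^ (-1 - σ)) *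
          (ENNReal.ofReal |x| * u x) := by
          apply setLIntegral_congr_fun hm.compl fun x hx => ?_
          have hx : 0 < |x| := by
            simp at hx; linarith
          rw [← mul_assoc, ← ENNReal.ofReal_mul (by positivity), ← Real.rpow_add_one hx.ne']
          congr 3; ring
      _ ≤ _ := cs_half _ (by fun_prop) (by fun_prop)
      _ ≤ _ := by
          rw [large_half (by linarith) hA]
          gcongr ?_ * ?_ ^ _
          · apply ENNReal.ofReal_le_ofReal
            rw [show -1 - σ + 1 / 2 = -1 / 2 - σ by ring]
            have h1 : 0 < 1 - 2 * σ := by linarith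
            have h2 : 0 < -(2 * (-1 - σ)) - 1 := by linarith
            have h3 : 2 / (-(2 * (-1 - σ)) - 1) ≤ 2 / (1 - 2 * σ) :=
              div_le_div_of_nonneg_left (by norm_num) h1 (by linarith)
            gcongr
          · exact setLIntegral_le_lintegral _ _

theorem key_eta {σ : ℝ} (hσ : 0 < σ) (hσ' : σ < 1 / 2) {G : ℝ → ℝ≥0∞} (hG : Measurable G)
    (B : ℝ≥0∞) (h1 : ∀ η, G η ≤ B) (h2 : (∫⁻ η, G η ^ 2) ^ ((1 : ℝ) / 2) ≤ B) :
    ∫⁻ x, ENNReal.ofReal (|x| ^ (-1 + σ)) * G x ≤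
      ENNReal.ofReal (2 / σ + (2 / (1 - 2 * σ)) ^ ((1 : ℝ) / 2)) * B := by
  have hm : MeasurableSet {x : ℝ | |x| ≤ 1} := measurableSet_le (by fun_prop) (by fun_prop)
  have : 0 < 1 - 2 * σ := by linarith
  rw [← lintegral_add_compl _ hm, ENNReal.ofReal_add (by positivity) (by positivity), add_mul]
  gcongr ?_ + ?_
  · calc _ ≤ ∫⁻ x in {x : ℝ | |x| ≤ 1}, ENNReal.ofReal (|x| ^ (-1 + σ)) * B := by
          gcongr; exact h1 _
      _ = _ := by
          rw [lintegral_mul_const _ (by fun_prop), lint_small (by linarith) one_pos]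
          congr 2
          simp
  · refine (cs_half _ (by fun_prop) (by fun_prop)).trans ?_
    rw [large_half (by linarith) one_pos]
    gcongr ?_ * ?_
    · apply le_of_eq
      rw [Real.one_rpow, mul_one]
      congr 3; ring
    · refine le_trans ?_ h2
      exact ENNReal.rpow_le_rpow (setLIntegral_le_lintegral _ _) (by norm_num)

noncomputable def Dc (σ : ℝ) : ℝ :=
  (2 / (1 - 2 * σ)) ^ ((1 : ℝ) / 2) * (2 / σ + (2 / (1 - 2 * σ)) ^ ((1 : ℝ) / 2)) * 7

theorem Dc_pos {σ : ℝ} (hσ : 0 < σ) (hσ' : σ < 1 / 2) : 0 < Dc σ := by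
  have : 0 < 1 - 2 * σ := by linarith
  unfold Dc; positivity

theorem forty_half (w : ℝ≥0∞) : (40 * w) ^ ((1 : ℝ) / 2) ≤ ENNReal.ofReal 7 * w ^ ((1 : ℝ) / 2) := by
  rw [ENNReal.mul_rpow_of_nonneg _ _ (by norm_num)]
  gcongr
  calc (40 : ℝ≥0∞) ^ ((1 : ℝ) / 2) ≤ (ENNReal.ofReal 7 ^ 2) ^ ((1 : ℝ) / 2) := by
        gcongr
        rw [← ENNReal.ofReal_pow (by norm_num)]
        norm_num
    _ = _ := by
        rw [← ENNReal.rpow_natCast, ← ENNReal.rpow_mul]; norm_num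

theorem eta_part {σ : ℝ} (hσ : 0 < σ) (hσ' : σ < 1 / 2) {F : ℝ × ℝ → ℂ} {K : ℝ} (h : Nice F K) :
    ∫⁻ η, ENNReal.ofReal (|η| ^ (-1 + σ)) * (∫⁻ ξ, ‖ft2 F ξ η‖ₑ ^ 2) ^ ((1 : ℝ) / 2) ≤
      ENNReal.ofReal ((2 / σ + (2 / (1 - 2 * σ)) ^ ((1 : ℝ) / 2)) * 7) *
        W2 F ^ ((1 : ℝ) / 2) := by
  have : 0 < 1 - 2 * σ := by linarith
  rw [ENNReal.ofReal_mul (by positivity), mul_assoc]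
  refine (key_eta hσ hσ' ?_ _ (fun η => ?_) ?_).trans
    (mul_le_mul_right (forty_half (W2 F)) _)
  · exact ((h.ft2_meas.enorm.pow_const 2).lintegral_prod_left' (μ := volume)).pow_const _
  · exact ENNReal.rpow_le_rpow (h.sup_bd η) (by norm_num)
  · refine ENNReal.rpow_le_rpow (le_trans (le_of_eq ?_) h.l2_bd) (by norm_num)
    congr 1; ext η
    rw [← ENNReal.rpow_natCast, ← ENNReal.rpow_mul]; norm_num

noncomputable def II (σ : ℝ) (F : ℝ × ℝ → ℂ) : ℝ≥0∞ :=
  ∫⁻ w : ℝ × ℝ, ENNReal.ofReal (|w.1| ^ (-σ) * |w.2| ^ (-1 + σ)) * ‖ft2 F w.1 w.2‖ₑ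

theorem main_bound_s10 {σ A : ℝ} (hσ : 0 < σ) (hσ' : σ < 1 / 2) (hA : 0 < A)
    {F F' : ℝ × ℝ → ℂ} {K K' : ℝ} (h : Nice F K) (h' : Nice F' K')
    (hd : ∀ ξ η, ENNReal.ofReal |ξ| * ‖ft2 F ξ η‖ₑ = ‖ft2 F' ξ η‖ₑ) :
    II σ F ≤ ENNReal.ofReal (Dc σ * A ^ (1 / 2 - σ)) * W2 F ^ ((1 : ℝ) / 2) +
      ENNReal.ofReal (Dc σ * A ^ (-1 / 2 - σ)) * W2 F' ^ ((1 : ℝ) / 2) := by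
  have hσ3 : 0 < 1 - 2 * σ := by linarith
  have hm := h.ft2_meas
  set c := (2 / (1 - 2 * σ)) ^ ((1 : ℝ) / 2) with hc
  have hc0 : 0 < c := by positivity
  have hmG : ∀ {F : ℝ × ℝ → ℂ} {K : ℝ}, Nice F K →
      Measurable (fun η => (∫⁻ ξ, ‖ft2 F ξ η‖ₑ ^ 2) ^ ((1 : ℝ) / 2)) := fun h =>
    ((h.ft2_meas.enorm.pow_const 2).lintegral_prod_left').pow_const _
  have hG := hmG h
  have hH := hmG h'
  calc II σ F = ∫⁻ η, ∫⁻ ξ, ENNReal.ofReal (|ξ| ^ (-σ) * |η| ^ (-1 + σ)) * ‖ft2 F ξ η‖ₑ := by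
        rw [II, Measure.volume_eq_prod, lintegral_prod_symm _ (by fun_prop)]
    _ = ∫⁻ η, ENNReal.ofReal (|η| ^ (-1 + σ)) *
          ∫⁻ ξ, ENNReal.ofReal (|ξ| ^ (-σ)) * ‖ft2 F ξ η‖ₑ := by
        congr 1; ext η
        rw [← lintegral_const_mul' _ _ ENNReal.ofReal_ne_top]
        congr 1; ext ξ
        rw [ENNReal.ofReal_mul (by positivity)]
        ring
    _ ≤ ∫⁻ η, (ENNReal.ofReal (c * A ^ (1 / 2 - σ)) * (ENNReal.ofReal (|η| ^ (-1 + σ)) *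
          (∫⁻ ξ, ‖ft2 F ξ η‖ₑ ^ 2) ^ ((1 : ℝ) / 2)) +
          ENNReal.ofReal (c * A ^ (-1 / 2 - σ)) * (ENNReal.ofReal (|η| ^ (-1 + σ)) *
          (∫⁻ ξ, ‖ft2 F' ξ η‖ₑ ^ 2) ^ ((1 : ℝ) / 2))) := by
        apply lintegral_mono fun η => ?_
        have hu : Measurable fun ξ => ‖ft2 F ξ η‖ₑ :=
          (hm.comp (measurable_id.prodMk measurable_const)).enorm
        have := key_xi hσ hσ' hA hu
        simp_rw [hd] at this
        refine (mul_le_mul_right this _).trans (le_of_eq ?_)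
        rw [← hc]
        ring
    _ = ENNReal.ofReal (c * A ^ (1 / 2 - σ)) * (∫⁻ η, ENNReal.ofReal (|η| ^ (-1 + σ)) *
          (∫⁻ ξ, ‖ft2 F ξ η‖ₑ ^ 2) ^ ((1 : ℝ) / 2)) +
          ENNReal.ofReal (c * A ^ (-1 / 2 - σ)) * ∫⁻ η, (ENNReal.ofReal (|η| ^ (-1 + σ)) *
          (∫⁻ ξ, ‖ft2 F' ξ η‖ₑ ^ 2) ^ ((1 : ℝ) / 2)) := by
        rw [lintegral_add_left (by fun_prop), lintegral_const_mul' _ _ ENNReal.ofReal_ne_top,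
          lintegral_const_mul' _ _ ENNReal.ofReal_ne_top]
    _ ≤ _ := add_le_add (mul_le_mul_right (eta_part hσ hσ' h) _)
          (mul_le_mul_right (eta_part hσ hσ' h') _)
    _ = _ := by
        rw [← mul_assoc, ← mul_assoc, ← ENNReal.ofReal_mul (by positivity),
          ← ENNReal.ofReal_mul (by positivity), Dc, ← hc]
        congr 3 <;> ring

theorem interp {σ D : ℝ} (hσ : 0 < σ) (hσ' : σ < 1 / 2) (hD : 0 < D) {I N M : ℝ≥0∞}
    (hN : N ≠ ⊤) (hM : M ≠ ⊤)
    (h : ∀ A : ℝ, 0 < A → I ≤ ENNReal.ofReal (D * A ^ (1 / 2 - σ)) * N +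
      ENNReal.ofReal (D * A ^ (-1 / 2 - σ)) * M) :
    I ≤ ENNReal.ofReal (2 * D) * N ^ ((1 : ℝ) / 2 + σ) * M ^ ((1 : ℝ) / 2 - σ) := by
  lift N to NNReal using hN
  lift M to NNReal using hM
  have key : ∀ ε : ℝ, 0 < ε → I ≤ ENNReal.ofReal (2 * D * (N + ε) ^ ((1 : ℝ) / 2 + σ) *
      (M + ε) ^ ((1 : ℝ) / 2 - σ)) := by
    intro ε hε
    have hn : 0 < (N : ℝ) + ε := by positivity
    have hm : 0 < (M : ℝ) + ε := by positivity
    refine (h ((M + ε) / (N + ε)) (by positivity)).trans ?_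
    rw [← ENNReal.ofReal_coe_nnreal, ← ENNReal.ofReal_coe_nnreal, ← ENNReal.ofReal_mul (by positivity),
      ← ENNReal.ofReal_mul (by positivity), ← ENNReal.ofReal_add (by positivity) (by positivity)]
    apply ENNReal.ofReal_le_ofReal
    set n := (N : ℝ) + ε
    set m := (M : ℝ) + ε
    have e1 : (m / n) ^ (1 / 2 - σ) * n = n ^ ((1 : ℝ) / 2 + σ) * m ^ ((1 : ℝ) / 2 - σ) := by
      rw [Real.div_rpow hm.le hn.le, div_mul_eq_mul_div, mul_div_assoc, mul_comm]
      congr 1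
      rw [show (1 : ℝ) / 2 + σ = 1 - (1 / 2 - σ) by ring, Real.rpow_sub hn 1, Real.rpow_one]
    have e2 : (m / n) ^ (-1 / 2 - σ) * m = n ^ ((1 : ℝ) / 2 + σ) * m ^ ((1 : ℝ) / 2 - σ) := by
      rw [show (1 : ℝ) / 2 - σ = (-1 / 2 - σ) + 1 by ring, Real.rpow_add_one hm.ne',
        Real.div_rpow hm.le hn.le, show (1 : ℝ) / 2 + σ = -(-1 / 2 - σ) by ring,
        Real.rpow_neg hn.le]
      field_simp
    calc _ ≤ D * (m / n) ^ (1 / 2 - σ) * n + D * (m / n) ^ (-1 / 2 - σ) * m := by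
          gcongr
          · simp only [n]; linarith
          · simp only [m]; linarith
      _ = D * ((m / n) ^ (1 / 2 - σ) * n) + D * ((m / n) ^ (-1 / 2 - σ) * m) := by ring
      _ = _ := by rw [e1, e2]; ring
  have lim : Filter.Tendsto (fun ε : ℝ => ENNReal.ofReal (2 * D * (N + ε) ^ ((1 : ℝ) / 2 + σ) *
      (M + ε) ^ ((1 : ℝ) / 2 - σ))) (nhdsWithin 0 (Set.Ioi 0))
      (nhds (ENNReal.ofReal (2 * D * (N + 0) ^ ((1 : ℝ) / 2 + σ) *
      (M + 0) ^ ((1 : ℝ) / 2 - σ)))) := by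
    apply Filter.Tendsto.mono_left _ nhdsWithin_le_nhds
    apply Continuous.tendsto (f := fun ε : ℝ => ENNReal.ofReal (2 * D *
      (N + ε) ^ ((1 : ℝ) / 2 + σ) * (M + ε) ^ ((1 : ℝ) / 2 - σ)))
    apply ENNReal.continuous_ofReal.comp
    have a1 : 0 ≤ (1 : ℝ) / 2 + σ := by linarith
    have a2 : 0 ≤ (1 : ℝ) / 2 - σ := by linarith
    exact ((continuous_const.mul ((continuous_const.add continuous_id).rpow_const
      fun _ => Or.inr a1))).mul ((continuous_const.add continuous_id).rpow_const fun _ => Or.inr a2)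
  have := ge_of_tendsto lim (by
    filter_upwards [self_mem_nhdsWithin] with ε hε using key ε hε)
  refine this.trans (le_of_eq ?_)
  rw [add_zero, add_zero, ENNReal.ofReal_mul (by positivity), ENNReal.ofReal_mul (by positivity),
    ← ENNReal.ofReal_rpow_of_nonneg (by positivity) (by linarith),
    ← ENNReal.ofReal_rpow_of_nonneg (by positivity) (by linarith),
    ENNReal.ofReal_coe_nnreal, ENNReal.ofReal_coe_nnreal]

theorem q_bd {t : ℝ} (ξ η : ℝ) :
    η ^ 2 ≤ qsym t ξ η ∧ ξ ^ 2 ≤ 9 * (1 + t ^ 2) * qsym t ξ η := by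
  have hd : 0 < 1 + t ^ 2 / 12 := by positivity
  have ha : 0 < 1 + t ^ 2 / 3 := by positivity
  set r := (1 + t ^ 2 / 12) ^ (-(1 : ℝ) / 2) with hr
  have hr2 : r ^ 2 = (1 + t ^ 2 / 12)⁻¹ := by
    rw [hr, ← Real.rpow_natCast, ← Real.rpow_mul hd.le, ← Real.rpow_neg_one]
    norm_num
  have hb : (t / 2 * r) ^ 2 ≤ 3 := by
    rw [mul_pow, hr2, ← div_eq_mul_inv, div_le_iff₀ hd]
    nlinarith
  have hq : qsym t ξ η = (1 + t ^ 2 / 3)⁻¹ * (ξ - t / 2 * r * η) ^ 2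
      + (1 + t ^ 2 / 3) * (1 + t ^ 2 / 12)⁻¹ * η ^ 2 := rfl
  set b := t / 2 * r
  have h1 : 1 ≤ (1 + t ^ 2 / 3) * (1 + t ^ 2 / 12)⁻¹ := by
    rw [← div_eq_mul_inv, le_div_iff₀ hd]
    nlinarith [sq_nonneg t]
  have h2 : η ^ 2 ≤ (1 + t ^ 2 / 3) * (1 + t ^ 2 / 12)⁻¹ * η ^ 2 :=
    le_mul_of_one_le_left (sq_nonneg _) h1
  have h3 : 0 ≤ (1 + t ^ 2 / 3)⁻¹ * (ξ - b * η) ^ 2 := by positivity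
  have h4 : η ^ 2 ≤ qsym t ξ η := by rw [hq]; linarith
  refine ⟨h4, ?_⟩
  have h5 : (ξ - b * η) ^ 2 ≤ (1 + t ^ 2 / 3) * qsym t ξ η := by
    have : (1 + t ^ 2 / 3)⁻¹ * (ξ - b * η) ^ 2 ≤ qsym t ξ η := by
      rw [hq]; nlinarith [sq_nonneg η]
    rwa [inv_mul_le_iff₀ ha] at this
  have h6 : ξ ^ 2 ≤ 2 * (ξ - b * η) ^ 2 + 2 * (b ^ 2 * η ^ 2) := by
    nlinarith [sq_nonneg (ξ - 2 * b * η)]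
  have h7 : b ^ 2 * η ^ 2 ≤ 3 * η ^ 2 := by gcongr
  have h8 : 0 ≤ qsym t ξ η := (sq_nonneg η).trans h4
  nlinarith [mul_nonneg (sq_nonneg t) h8]

theorem kernel_bd {σ t ξ η : ℝ} (hσ : 0 < σ) (hσ' : σ < 1 / 2) (hξ : ξ ≠ 0) (hη : η ≠ 0) :
    |ξ| / qsym t ξ η ≤ 9 * Real.sqrt (1 + t ^ 2) ^ (1 + σ) * (|ξ| ^ (-σ) * |η| ^ (-1 + σ)) ∧
    |η| / qsym t ξ η ≤ 9 * Real.sqrt (1 + t ^ 2) ^ σ * (|ξ| ^ (-σ) * |η| ^ (-1 + σ)) := by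
  obtain ⟨h1, h2⟩ := q_bd (t := t) ξ η
  have hη2 : 0 < η ^ 2 := by positivity
  have hq : 0 < qsym t ξ η := hη2.trans_le h1
  set q := qsym t ξ η
  set T := Real.sqrt (1 + t ^ 2) with hT
  have hTpos : 0 < T := Real.sqrt_pos.2 (by positivity)
  have hT2 : T ^ 2 = 1 + t ^ 2 := Real.sq_sqrt (by positivity)
  set s := Real.sqrt q with hs
  have hs0 : 0 < s := Real.sqrt_pos.2 hq
  have hs2 : s ^ 2 = q := Real.sq_sqrt hq.le
  have b1 : |η| ≤ s := abs_le_of_sq_le_sq (by rw [hs2]; exact h1) hs0.le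
  have b2 : |ξ| ≤ 3 * T * s := by
    have : ξ ^ 2 ≤ (3 * T * s) ^ 2 := by
      rw [mul_pow, mul_pow, hs2, hT2]; linarith
    exact abs_le_of_sq_le_sq this (by positivity)
  have x0 : 0 < |ξ| := abs_pos.2 hξ
  have y0 : 0 < |η| := abs_pos.2 hη
  constructor
  · rw [div_le_iff₀ hq]
    calc |ξ| = |ξ| ^ (1 + σ) * |η| ^ (1 - σ) * (|ξ| ^ (-σ) * |η| ^ (-1 + σ)) := by
          rw [mul_mul_mul_comm, ← Real.rpow_add x0, ← Real.rpow_add y0]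
          rw [show 1 + σ + -σ = 1 by ring, show 1 - σ + (-1 + σ) = 0 by ring]; simp
      _ ≤ (3 * T * s) ^ (1 + σ) * s ^ (1 - σ) * (|ξ| ^ (-σ) * |η| ^ (-1 + σ)) := by
          have : 0 ≤ 1 - σ := by linarith
          gcongr
      _ = 3 ^ (1 + σ) * T ^ (1 + σ) * (s ^ (1 + σ) * s ^ (1 - σ)) *
            (|ξ| ^ (-σ) * |η| ^ (-1 + σ)) := by
          rw [Real.mul_rpow (by positivity) hs0.le, Real.mul_rpow (by positivity) hTpos.le]; ring
      _ = 3 ^ (1 + σ) * T ^ (1 + σ) * q * (|ξ| ^ (-σ) * |η| ^ (-1 + σ)) := by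
          rw [← Real.rpow_add hs0, show 1 + σ + (1 - σ) = (2 : ℕ) by push_cast; ring,
            Real.rpow_natCast, hs2]
      _ ≤ 9 * T ^ (1 + σ) * q * (|ξ| ^ (-σ) * |η| ^ (-1 + σ)) := by
          have : (3 : ℝ) ^ (1 + σ) ≤ 9 := by
            calc (3 : ℝ) ^ (1 + σ) ≤ 3 ^ (2 : ℝ) :=
                  Real.rpow_le_rpow_of_exponent_le (by norm_num) (by linarith)
              _ = 9 := by norm_num
          gcongr
      _ = _ := by ring
  · rw [div_le_iff₀ hq]
    calc |η| = |ξ| ^ σ * |η| ^ (2 - σ) * (|ξ| ^ (-σ) * |η| ^ (-1 + σ)) := by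
          rw [mul_mul_mul_comm, ← Real.rpow_add x0, ← Real.rpow_add y0]
          rw [show σ + -σ = 0 by ring, show 2 - σ + (-1 + σ) = 1 by ring]; simp
      _ ≤ (3 * T * s) ^ σ * s ^ (2 - σ) * (|ξ| ^ (-σ) * |η| ^ (-1 + σ)) := by
          have : 0 ≤ 2 - σ := by linarith
          gcongr
      _ = 3 ^ σ * T ^ σ * (s ^ σ * s ^ (2 - σ)) *
            (|ξ| ^ (-σ) * |η| ^ (-1 + σ)) := by
          rw [Real.mul_rpow (by positivity) hs0.le, Real.mul_rpow (by positivity) hTpos.le]; ring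
      _ = 3 ^ σ * T ^ σ * q * (|ξ| ^ (-σ) * |η| ^ (-1 + σ)) := by
          rw [← Real.rpow_add hs0, show σ + (2 - σ) = (2 : ℕ) by push_cast; ring,
            Real.rpow_natCast, hs2]
      _ ≤ 9 * T ^ σ * q * (|ξ| ^ (-σ) * |η| ^ (-1 + σ)) := by
          have : (3 : ℝ) ^ σ ≤ 9 := by
            calc (3 : ℝ) ^ σ ≤ 3 ^ (2 : ℝ) :=
                  Real.rpow_le_rpow_of_exponent_le (by norm_num) (by linarith)
              _ = 9 := by norm_num
          gcongr
      _ = _ := by ring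

theorem op_bd {σ t S : ℝ} (hS : 0 ≤ S) (k : ℝ × ℝ → ℝ) (F : ℝ × ℝ → ℂ)
    (hk : ∀ w : ℝ × ℝ, w.1 ≠ 0 → w.2 ≠ 0 →
      |k w| / qsym t w.1 w.2 ≤ 9 * S * (|w.1| ^ (-σ) * |w.2| ^ (-1 + σ))) :
    eLpNorm (fun P : ℝ × ℝ => (((2 * Real.pi) ^ (-2 : ℤ) : ℝ) : ℂ) *
    ∫ w : ℝ × ℝ,
      -Complex.I * (k w : ℂ) / ((qsym t w.1 w.2 : ℝ) : ℂ) * ft2 F w.1 w.2 *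
        Complex.exp (Complex.I * ((P.1 * w.1 + P.2 * w.2 : ℝ) : ℂ))) ⊤ ≤
      ENNReal.ofReal (S / 2) * II σ F := by
  rw [eLpNorm_exponent_top]
  apply eLpNormEssSup_le_of_ae_enorm_bound
  refine Filter.Eventually.of_forall fun P => ?_
  have hne : ∀ᵐ x : ℝ, x ≠ 0 := Measure.ae_ne volume 0
  have hae : ∀ᵐ w : ℝ × ℝ, w.1 ≠ 0 ∧ w.2 ≠ 0 :=
    (Measure.quasiMeasurePreserving_fst.ae hne).and (Measure.quasiMeasurePreserving_snd.ae hne)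
  calc _ ≤ ENNReal.ofReal ((2 * Real.pi) ^ (-2 : ℤ)) * (ENNReal.ofReal (9 * S) * II σ F) := by
        rw [enorm_mul, ← ofReal_norm, Complex.norm_real, Real.norm_of_nonneg (by positivity)]
        gcongr
        refine (enorm_integral_le_lintegral_enorm _).trans ?_
        rw [II, ← lintegral_const_mul' _ _ ENNReal.ofReal_ne_top]
        apply lintegral_mono_ae
        filter_upwards [hae] with w hw
        have hq : 0 ≤ qsym t w.1 w.2 := (sq_nonneg _).trans (q_bd w.1 w.2).1
        rw [enorm_mul, enorm_mul, ← ofReal_norm (Complex.exp _), norm_exp_fac', ENNReal.ofReal_one,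
          mul_one, ← mul_assoc, ← ENNReal.ofReal_mul (by positivity)]
        gcongr
        rw [← ofReal_norm]
        apply ENNReal.ofReal_le_ofReal
        rw [norm_div, norm_mul, norm_neg, Complex.norm_I, one_mul, Complex.norm_real,
          Complex.norm_real, Real.norm_eq_abs, Real.norm_of_nonneg hq]
        exact hk w hw.1 hw.2
    _ ≤ _ := by
        rw [← mul_assoc, ← ENNReal.ofReal_mul (by positivity)]
        gcongr
        have : (2 * Real.pi) ^ (-2 : ℤ) ≤ 1 / 36 := by
          rw [zpow_neg, one_div]
          apply inv_anti₀ (by norm_num)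
          have := Real.pi_gt_three
          norm_cast
          nlinarith
        nlinarith

theorem schwartz_nice (f : 𝓢(ℝ × ℝ, ℝ)) : ∃ K, Nice (fun p => (f p : ℂ)) K := by
  refine ⟨2 ^ 4 * (Finset.Iic (4, 0)).sup (fun m => SchwartzMap.seminorm ℝ m.1 m.2) f,
    Complex.continuous_ofReal.comp f.continuous, fun x y => ?_⟩
  have h := SchwartzMap.one_add_le_sup_seminorm_apply (𝕜 := ℝ) (m := (4, 0)) (k := 4) (n := 0)
    le_rfl le_rfl f (x, y)
  rw [norm_iteratedFDeriv_zero] at h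
  set K := 2 ^ 4 * (Finset.Iic (4, 0)).sup (fun m => SchwartzMap.seminorm ℝ m.1 m.2) f
  rw [Complex.norm_real, ← mul_inv, ← div_eq_mul_inv, le_div_iff₀ (by positivity), mul_comm]
  refine le_trans ?_ h
  gcongr
  have hx : |x| ≤ ‖((x, y) : ℝ × ℝ)‖ := norm_fst_le (x, y)
  have hy : |y| ≤ ‖((x, y) : ℝ × ℝ)‖ := norm_snd_le (x, y)
  have key : ∀ z : ℝ, |z| ≤ ‖((x, y) : ℝ × ℝ)‖ → 1 + z ^ 2 ≤ (1 + ‖((x, y) : ℝ × ℝ)‖) ^ 2 := by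
    intro z hz
    rw [← sq_abs]
    nlinarith [abs_nonneg z]
  calc _ ≤ (1 + ‖((x, y) : ℝ × ℝ)‖) ^ 2 * (1 + ‖((x, y) : ℝ × ℝ)‖) ^ 2 :=
        mul_le_mul (key x hx) (key y hy) (by positivity) (by positivity)
    _ = _ := by ring

theorem pderivX_eq (f : 𝓢(ℝ × ℝ, ℝ)) (p : ℝ × ℝ) :
    pderivX (fun p => f p) p = fderiv ℝ f p (1, 0) := by
  unfold pderivX
  have h1 : HasDerivAt (fun x : ℝ => (x, p.2)) ((1 : ℝ), (0 : ℝ)) p.1 :=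
    (hasDerivAt_id _).prodMk (hasDerivAt_const _ _)
  have h2 : HasFDerivAt f (fderiv ℝ f p) (p.1, p.2) := f.differentiableAt.hasFDerivAt
  exact (h2.comp_hasDerivAt p.1 h1).deriv

theorem pderivX_schwartz (f : 𝓢(ℝ × ℝ, ℝ)) : ∃ g : 𝓢(ℝ × ℝ, ℝ),
    ∀ p, g p = pderivX (fun p => f p) p :=
  ⟨LineDeriv.lineDerivOp ((1 : ℝ), (0 : ℝ)) f, fun p => by
    rw [pderivX_eq, SchwartzMap.lineDerivOp_apply_eq_fderiv]⟩

theorem Nice.integrable_mul {F : ℝ × ℝ → ℂ} {K : ℝ} (h : Nice F K) {e : ℝ × ℝ → ℂ}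
    (he : Continuous e) (C : ℝ) (hb : ∀ p, ‖e p‖ ≤ C) : Integrable (fun p => e p * F p) :=
  h.integrable.bdd_mul he.aestronglyMeasurable (Filter.Eventually.of_forall hb)

theorem ft2_deriv {f g : 𝓢(ℝ × ℝ, ℝ)} (hg : ∀ p, g p = pderivX (fun p => f p) p) (ξ η : ℝ) :
    ft2 (fun p => (g p : ℂ)) ξ η = Complex.I * ξ * ft2 (fun p => (f p : ℂ)) ξ η := by
  obtain ⟨K, hK⟩ := schwartz_nice f
  obtain ⟨K', hK'⟩ := schwartz_nice g
  set e : ℝ × ℝ → ℂ := fun p => Complex.exp (-Complex.I * ((p.1 * ξ + p.2 * η : ℝ) : ℂ)) with he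
  have hec : Continuous e := by fun_prop
  have heb : ∀ p, ‖e p‖ ≤ 1 := fun p => (norm_exp_fac _).le
  have hed : ∀ p, HasFDerivAt e (e p • (-Complex.I • Complex.ofRealCLM.comp
      (ξ • ContinuousLinearMap.fst ℝ ℝ ℝ + η • ContinuousLinearMap.snd ℝ ℝ ℝ))) p := by
    intro p
    apply HasFDerivAt.cexp
    apply HasFDerivAt.const_mul
    have : HasFDerivAt (fun p : ℝ × ℝ => p.1 * ξ + p.2 * η)
        (ξ • ContinuousLinearMap.fst ℝ ℝ ℝ + η • ContinuousLinearMap.snd ℝ ℝ ℝ) p :=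
      (hasFDerivAt_fst.mul_const ξ).add (hasFDerivAt_snd.mul_const η)
    exact Complex.ofRealCLM.hasFDerivAt.comp p this
  have hed' : ∀ p, fderiv ℝ e p (1, 0) = -(Complex.I * ξ) * e p := fun p => by
    rw [(hed p).fderiv]
    simp
    ring
  have hfd : ∀ p, HasFDerivAt (fun p => (f p : ℂ)) (Complex.ofRealCLM.comp (fderiv ℝ f p)) p :=
    fun p => Complex.ofRealCLM.hasFDerivAt.comp p f.differentiableAt.hasFDerivAt
  have hfd' : ∀ p, fderiv ℝ (fun p => (f p : ℂ)) p (1, 0) = (g p : ℂ) := fun p => by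
    rw [(hfd p).fderiv, hg, pderivX_eq]
    simp
  have ibp := integral_mul_fderiv_eq_neg_fderiv_mul_of_integrable (μ := (volume : Measure (ℝ × ℝ)))
    (f := e) (g := fun p => (f p : ℂ)) (v := (1, 0)) ?_ ?_ ?_
    (fun p _ => (hed p).differentiableAt) (fun p _ => (hfd p).differentiableAt)
  · simp only [hed', hfd'] at ibp
    have e1 : ft2 (fun p => (g p : ℂ)) ξ η = ∫ p, e p * g p := by
      unfold ft2; congr 1; ext p; rw [mul_comm]
    have e2 : ft2 (fun p => (f p : ℂ)) ξ η = ∫ p, e p * f p := by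
      unfold ft2; congr 1; ext p; rw [mul_comm]
    rw [e1, ibp, e2, ← integral_const_mul, ← integral_neg]
    congr 1; ext p; ring
  · simp only [hed', mul_assoc]
    exact (hK.integrable_mul hec 1 heb).const_mul _
  · simp only [hfd']
    exact hK'.integrable_mul hec 1 heb
  · exact hK.integrable_mul hec 1 heb

theorem wnorm_eq (f : ℝ × ℝ → ℝ) :
    wnorm 1 f = W2 (fun p => (f p : ℂ)) ^ ((1 : ℝ) / 2) := by
  have h : wnorm 1 f ^ 2 = W2 (fun p => (f p : ℂ)) := by
    rw [wnorm, sq_eLpNorm_two, W2]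
    congr 1; ext p
    rw [enorm_mul, mul_pow, enorm_norm]
    have hp : 0 ≤ 1 + p.1 ^ 2 + p.2 ^ 2 := by positivity
    congr 1
    · rw [← ofReal_norm, Real.norm_of_nonneg (by positivity), ← ENNReal.ofReal_pow (by positivity),
        ← Real.rpow_natCast, ← Real.rpow_mul hp]
      norm_num
    · rw [← ofReal_norm, ← ofReal_norm, Complex.norm_real]
  rw [← h, ← ENNReal.rpow_natCast, ← ENNReal.rpow_mul]
  norm_num

/-- Lemma 3.2: for `0 < σ < 1/2` there is `C = C(σ) > 0` such that for all `t > 0` and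
Schwartz `f`, `‖∂_X Δ_t⁻¹ f‖_{L^∞} + ⟨t⟩ ‖∂_Y Δ_t⁻¹ f‖_{L^∞} ≤
C ⟨t⟩^{1+σ} ‖f‖_{L²(1)}^{1/2+σ} ‖∂_X f‖_{L²(1)}^{1/2-σ}`. -/
theorem stmt_10 (σ : ℝ) (hσ : 0 < σ) (hσ' : σ < 1 / 2) :
    ∃ C : ℝ, 0 < C ∧
      ∀ t : ℝ, 0 < t →
        ∀ f : 𝓢(ℝ × ℝ, ℝ),
          eLpNorm (dxInvLap t (fun p => (f p : ℂ))) ⊤ +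
              ENNReal.ofReal (Real.sqrt (1 + t ^ 2)) *
                eLpNorm (dyInvLap t (fun p => (f p : ℂ))) ⊤ ≤
            ENNReal.ofReal (C * Real.sqrt (1 + t ^ 2) ^ (1 + σ)) *
              wnorm 1 (fun p => f p) ^ ((1 : ℝ) / 2 + σ) *
              wnorm 1 (pderivX fun p => f p) ^ ((1 : ℝ) / 2 - σ) := by
  have hD := Dc_pos hσ hσ'
  refine ⟨2 * Dc σ, by positivity, fun t ht f => ?_⟩
  obtain ⟨g, hg⟩ := pderivX_schwartz f
  obtain ⟨K, hK⟩ := schwartz_nice f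
  obtain ⟨K', hK'⟩ := schwartz_nice g
  have hT : 0 < Real.sqrt (1 + t ^ 2) := Real.sqrt_pos.2 (by positivity)
  set T := Real.sqrt (1 + t ^ 2) with hTdef
  have hg' : pderivX (fun p => f p) = fun p => g p := by ext p; rw [hg]
  have hI : II σ (fun p => (f p : ℂ)) ≤ ENNReal.ofReal (2 * Dc σ) *
      wnorm 1 (fun p => f p) ^ ((1 : ℝ) / 2 + σ) *
      wnorm 1 (pderivX fun p => f p) ^ ((1 : ℝ) / 2 - σ) := by
    rw [hg', wnorm_eq, wnorm_eq]
    apply interp hσ hσ' hD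
    · exact ENNReal.rpow_ne_top_of_nonneg (by norm_num) hK.W2_lt_top.ne
    · exact ENNReal.rpow_ne_top_of_nonneg (by norm_num) hK'.W2_lt_top.ne
    · intro A hA
      apply main_bound_s10 hσ hσ' hA hK hK'
      intro ξ η
      rw [ft2_deriv hg, enorm_mul]
      congr 1
      rw [← ofReal_norm, norm_mul, Complex.norm_I, one_mul, Complex.norm_real, Real.norm_eq_abs]
  have hx : eLpNorm (dxInvLap t (fun p => (f p : ℂ))) ⊤ ≤
      ENNReal.ofReal (T ^ (1 + σ) / 2) * II σ (fun p => (f p : ℂ)) :=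
    op_bd (by positivity) (fun w => w.1) _ fun w h1 h2 => (kernel_bd hσ hσ' h1 h2).1
  have hy : eLpNorm (dyInvLap t (fun p => (f p : ℂ))) ⊤ ≤
      ENNReal.ofReal (T ^ σ / 2) * II σ (fun p => (f p : ℂ)) :=
    op_bd (by positivity) (fun w => w.2) _ fun w h1 h2 => (kernel_bd hσ hσ' h1 h2).2
  calc _ ≤ ENNReal.ofReal (T ^ (1 + σ) / 2) * II σ (fun p => (f p : ℂ)) +
        ENNReal.ofReal T * (ENNReal.ofReal (T ^ σ / 2) * II σ (fun p => (f p : ℂ))) := by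
        gcongr
    _ = ENNReal.ofReal (T ^ (1 + σ)) * II σ (fun p => (f p : ℂ)) := by
        rw [← mul_assoc, ← ENNReal.ofReal_mul hT.le, ← add_mul,
          ← ENNReal.ofReal_add (by positivity) (by positivity), Real.rpow_add hT, Real.rpow_one]
        congr 2; ring
    _ ≤ _ := mul_le_mul_right hI _
    _ = _ := by
        rw [ENNReal.ofReal_mul (p := 2 * Dc σ) (by positivity)]
        ring
end
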